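/- arXiv:2310.06946 — 15 statements merged into one kernel-verified Lean document; each statement's English description precedes it below -/
import Mathlib

section
/- There exist a constant K ∈ ℝ \ {0} and a function f : ℝ → ℝ that is smooth on J, satisfies f'(r) > 0 for all r ∈ J, and satisfies f(r) = K·h(r)·f'(r) for all r ∈ J, if and only if h'(r*) ≠ 0. -/
/-!
If `f = K h f'` with `f` smooth, differentiating at `r*` (where `h` vanishes) gives
`f'(r*) = K h'(r*) f'(r*)`, so `h'(r*) ≠ 0`.

Conversely let `c = h'(r*) ≠ 0` and take `K = 1 / c`. By Hadamard's lemma (`hadamard_division`),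
applied twice, `h(r) = (r - r*) g(r)` and `g(r) = c + (r - r*) k(r)` with `g`, `k` smooth on `J`.
The function `g` has no zero, so by the intermediate value theorem it has the sign of `c`
throughout. With `u` a primitive of `-k / g`, the function `f(r) = (r - r*) exp (u(r))` satisfies
`f' = exp u * (1 - (r - r*) k / g) = exp u * c / g > 0`, and therefore `K h f' = f`.

Hadamard's lemma rests on `ψ(r) - ψ(x₀) = (r - x₀) ∫₀¹ ψ'(x₀ + t (r - x₀)) dt`; the integral is
smooth in `r` because differentiating `∫₀¹ tⁿ φ(x₀ + t (r - x₀)) dt` yields an integral of the same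
shape, with `n + 1` and `φ'` (`hasDerivAt_momentIntegral`).
-/

open Set

/-- The weighted segment integral `r ↦ ∫₀¹ tⁿ φ(x₀ + t (r - x₀)) dt`. The weight `tⁿ` makes this
family closed under differentiation in `r`. -/
noncomputable def momentIntegral (x₀ : ℝ) (n : ℕ) (φ : ℝ → ℝ) (r : ℝ) : ℝ :=
  ∫ t in (0 : ℝ)..1, t ^ n * φ (x₀ + t * (r - x₀))

theorem segment_mem_Ioo {a b x₀ r t : ℝ} (hx : x₀ ∈ Ioo a b) (hr : r ∈ Ioo a b)
    (ht : t ∈ Icc (0 : ℝ) 1) : x₀ + t * (r - x₀) ∈ Ioo a b := by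
  have := (convex_Ioo a b).add_smul_sub_mem hx hr ht
  simpa using this

theorem continuousOn_moment {a b x₀ r : ℝ} {φ : ℝ → ℝ} (n : ℕ) (hx : x₀ ∈ Ioo a b)
    (hr : r ∈ Ioo a b) (hφ : ContinuousOn φ (Ioo a b)) :
    ContinuousOn (fun t : ℝ => t ^ n * φ (x₀ + t * (r - x₀))) (Icc 0 1) := by
  refine ContinuousOn.mul (by fun_prop) ?_
  exact hφ.comp (f := fun t : ℝ => x₀ + t * (r - x₀)) (by fun_prop)
    fun t ht => segment_mem_Ioo hx hr ht

theorem hasDerivAt_momentIntegral {a b x₀ r : ℝ} {φ : ℝ → ℝ} (n : ℕ) (hx : x₀ ∈ Ioo a b)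
    (hr : r ∈ Ioo a b) (hφ : ContDiffOn ℝ (⊤ : ℕ∞) φ (Ioo a b)) :
    HasDerivAt (momentIntegral x₀ n φ) (momentIntegral x₀ (n + 1) (deriv φ) r) r := by
  obtain ⟨hd, hφ'⟩ := (contDiffOn_infty_iff_deriv_of_isOpen isOpen_Ioo).1 hφ
  -- A compact subinterval of `Ioo a b` containing `x₀` and a neighbourhood of `r`.
  obtain ⟨c, hac, hc⟩ := exists_between (lt_min hx.1 hr.1)
  obtain ⟨d, hd', hdb⟩ := exists_between (max_lt hx.2 hr.2)
  rw [lt_min_iff] at hc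
  rw [max_lt_iff] at hd'
  have hsub : Icc c d ⊆ Ioo a b := fun y hy => ⟨hac.trans_le hy.1, hy.2.trans_lt hdb⟩
  have hxc : x₀ ∈ Ioo c d := ⟨hc.1, hd'.1⟩
  have hrc : r ∈ Ioo c d := ⟨hc.2, hd'.2⟩
  obtain ⟨C, hC⟩ := isCompact_Icc.exists_bound_of_continuousOn (hφ'.continuousOn.mono hsub)
  have hI : uIoc (0 : ℝ) 1 ⊆ Icc 0 1 := by
    rw [uIoc_of_le zero_le_one]; exact Ioc_subset_Icc_self
  have hmeas : ∀ {ψ : ℝ → ℝ} (m : ℕ) {y : ℝ}, y ∈ Ioo a b → ContinuousOn ψ (Ioo a b) →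
      MeasureTheory.AEStronglyMeasurable (fun t : ℝ => t ^ m * ψ (x₀ + t * (y - x₀)))
        (MeasureTheory.volume.restrict (uIoc (0 : ℝ) 1)) := fun m y hy hψ =>
    ((continuousOn_moment m hx hy hψ).mono hI).aestronglyMeasurable measurableSet_uIoc
  refine (intervalIntegral.hasDerivAt_integral_of_dominated_loc_of_deriv_le
    (F := fun y t => t ^ n * φ (x₀ + t * (y - x₀)))
    (F' := fun y t => t ^ (n + 1) * deriv φ (x₀ + t * (y - x₀)))
    (bound := fun _ => C) (s := Ioo c d) (isOpen_Ioo.mem_nhds hrc) ?_ ?_ ?_ ?_ ?_ ?_).2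
  · filter_upwards [isOpen_Ioo.mem_nhds hr] with y hy
    exact hmeas n hy hφ.continuousOn
  · refine ContinuousOn.intervalIntegrable ?_
    rw [uIcc_of_le zero_le_one]
    exact continuousOn_moment n hx hr hφ.continuousOn
  · exact hmeas (n + 1) hr hφ'.continuousOn
  · refine Filter.Eventually.of_forall fun t ht y hy => ?_
    have ht' := hI ht
    have h1 := hC _ (Ioo_subset_Icc_self (segment_mem_Ioo hxc hy ht'))
    rw [norm_mul, norm_pow, Real.norm_of_nonneg ht'.1]
    calc t ^ (n + 1) * ‖deriv φ (x₀ + t * (y - x₀))‖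
        ≤ 1 * ‖deriv φ (x₀ + t * (y - x₀))‖ := by
          gcongr
          exact pow_le_one₀ ht'.1 ht'.2
      _ ≤ C := by rwa [one_mul]
  · exact intervalIntegrable_const
  · refine Filter.Eventually.of_forall fun t ht y hy => ?_
    have hm := hsub (Ioo_subset_Icc_self (segment_mem_Ioo hxc hy (hI ht)))
    have h1 : HasDerivAt φ (deriv φ (x₀ + t * (y - x₀))) (x₀ + t * (y - x₀)) :=
      (hd.differentiableAt (isOpen_Ioo.mem_nhds hm)).hasDerivAt
    have h2 : HasDerivAt (fun y : ℝ => x₀ + t * (y - x₀)) t y := by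
      simpa using (((hasDerivAt_id y).sub_const x₀).const_mul t).const_add x₀
    have h3 := (h1.comp y h2).const_mul (t ^ n)
    rw [pow_succ, mul_assoc, mul_comm t]
    exact h3

theorem contDiffOn_momentIntegral {a b x₀ : ℝ} {φ : ℝ → ℝ} (n : ℕ) (hx : x₀ ∈ Ioo a b)
    (hφ : ContDiffOn ℝ (⊤ : ℕ∞) φ (Ioo a b)) :
    ContDiffOn ℝ (⊤ : ℕ∞) (momentIntegral x₀ n φ) (Ioo a b) := by
  rw [contDiffOn_infty]
  intro m
  induction m generalizing n φ with
  | zero =>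
    exact contDiffOn_zero.2 fun r hr =>
      (hasDerivAt_momentIntegral n hx hr hφ).continuousAt.continuousWithinAt
  | succ m ih =>
    rw [Nat.cast_succ, contDiffOn_succ_iff_deriv_of_isOpen isOpen_Ioo]
    refine ⟨fun r hr => (hasDerivAt_momentIntegral n hx hr
      hφ).differentiableAt.differentiableWithinAt, by simp, ?_⟩
    exact (ih (n + 1) ((contDiffOn_infty_iff_deriv_of_isOpen isOpen_Ioo).1 hφ).2).congr
      fun r hr => (hasDerivAt_momentIntegral n hx hr hφ).deriv

/-- Hadamard's lemma on an open interval. -/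
theorem hadamard_division {a b x₀ : ℝ} {ψ : ℝ → ℝ} (hx : x₀ ∈ Ioo a b)
    (hψ : ContDiffOn ℝ (⊤ : ℕ∞) ψ (Ioo a b)) :
    ∃ g : ℝ → ℝ, ContDiffOn ℝ (⊤ : ℕ∞) g (Ioo a b) ∧
      ∀ r ∈ Ioo a b, ψ r = ψ x₀ + (r - x₀) * g r := by
  obtain ⟨hd, hψ'⟩ := (contDiffOn_infty_iff_deriv_of_isOpen isOpen_Ioo).1 hψ
  refine ⟨momentIntegral x₀ 0 (deriv ψ), contDiffOn_momentIntegral 0 hx hψ', fun r hr => ?_⟩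
  have hcont := continuousOn_moment 0 hx hr hψ'.continuousOn
  have key : ∫ t in (0 : ℝ)..1, (r - x₀) * (t ^ 0 * deriv ψ (x₀ + t * (r - x₀)))
      = ψ (x₀ + 1 * (r - x₀)) - ψ (x₀ + 0 * (r - x₀)) := by
    refine intervalIntegral.integral_eq_sub_of_hasDerivAt
      (f := fun t => ψ (x₀ + t * (r - x₀))) (fun t ht => ?_) ?_
    · rw [uIcc_of_le zero_le_one] at ht
      have h1 : HasDerivAt ψ (deriv ψ (x₀ + t * (r - x₀))) (x₀ + t * (r - x₀)) :=
        (hd.differentiableAt (isOpen_Ioo.mem_nhds (segment_mem_Ioo hx hr ht))).hasDerivAt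
      have h2 : HasDerivAt (fun t : ℝ => x₀ + t * (r - x₀)) (r - x₀) t := by
        simpa using ((hasDerivAt_id t).mul_const (r - x₀)).const_add x₀
      have h3 := h1.comp t h2
      rw [pow_zero, one_mul, mul_comm]
      exact h3
    · refine ContinuousOn.intervalIntegrable ?_
      rw [uIcc_of_le zero_le_one]
      exact hcont.const_mul (r - x₀)
  rw [intervalIntegral.integral_const_mul] at key
  have e1 : x₀ + 1 * (r - x₀) = r := by ring
  have e0 : x₀ + 0 * (r - x₀) = x₀ := by ring
  rw [e1, e0] at key
  unfold momentIntegral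
  linarith

theorem exists_primitive_Ioo {a b x₀ : ℝ} {p : ℝ → ℝ} (hx : x₀ ∈ Ioo a b)
    (hp : ContDiffOn ℝ (⊤ : ℕ∞) p (Ioo a b)) :
    ∃ u : ℝ → ℝ, ContDiffOn ℝ (⊤ : ℕ∞) u (Ioo a b) ∧ ∀ r ∈ Ioo a b, HasDerivAt u (p r) r := by
  have hu : ∀ r ∈ Ioo a b, HasDerivAt (fun y => ∫ t in x₀..y, p t) (p r) r := fun r hr =>
    intervalIntegral.integral_hasDerivAt_right
      ((hp.continuousOn.mono (ordConnected_Ioo.uIcc_subset hx hr)).intervalIntegrable)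
      (hp.continuousOn.stronglyMeasurableAtFilter isOpen_Ioo r hr)
      (hp.continuousOn.continuousAt (isOpen_Ioo.mem_nhds hr))
  refine ⟨_, (contDiffOn_infty_iff_deriv_of_isOpen isOpen_Ioo).2 ⟨fun r hr =>
    (hu r hr).differentiableAt.differentiableWithinAt, hp.congr fun r hr => (hu r hr).deriv⟩, hu⟩

/-- A nonzero constant `K` and an increasing smooth solution of the horizon
ODE `f = K·h·f'` on the open interval `J = Ioo a b ⊆ (0,∞)` exist iff `h'(r*) ≠ 0`. -/
theorem stmt_0 (a b rstar : ℝ) (h : ℝ → ℝ)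
    (hJ : Ioo a b ⊆ Ioi 0) (hr : rstar ∈ Ioo a b)
    (hsm : ContDiffOn ℝ (⊤ : ℕ∞) h (Ioo a b))
    (h0 : h rstar = 0)
    (hne : ∀ r ∈ Ioo a b, r ≠ rstar → h r ≠ 0) :
    (∃ (K : ℝ) (f : ℝ → ℝ), K ≠ 0 ∧
        ContDiffOn ℝ (⊤ : ℕ∞) f (Ioo a b) ∧
        (∀ r ∈ Ioo a b, 0 < deriv f r) ∧
        (∀ r ∈ Ioo a b, f r = K * h r * deriv f r)) ↔
      deriv h rstar ≠ 0 := by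
  have hnhds : Ioo a b ∈ nhds rstar := isOpen_Ioo.mem_nhds hr
  have hdh : HasDerivAt h (deriv h rstar) rstar :=
    ((hsm.differentiableOn (by simp)).differentiableAt hnhds).hasDerivAt
  constructor
  · rintro ⟨K, f, -, hf, hpos, hode⟩ hzero
    have hdf := ((contDiffOn_infty_iff_deriv_of_isOpen isOpen_Ioo).1 hf).2
    have hd2 : HasDerivAt (deriv f) (deriv (deriv f) rstar) rstar :=
      ((hdf.differentiableOn (by simp)).differentiableAt hnhds).hasDerivAt
    have h1 := (hdh.const_mul K).mul hd2
    have h2 : f =ᶠ[nhds rstar] (fun y => K * h y) * deriv f :=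
      Filter.eventually_of_mem hnhds hode
    have h3 := (h1.congr_of_eventuallyEq h2).deriv
    rw [hzero, h0] at h3
    have := hpos rstar hr
    simp at h3
    linarith
  · intro hc
    set c := deriv h rstar with hcdef
    obtain ⟨g, hg, hgh⟩ := hadamard_division hr hsm
    obtain ⟨k, hk, hkg⟩ := hadamard_division hr hg
    simp only [h0, zero_add] at hgh
    have hgc : g rstar = c := by
      have hdg : HasDerivAt g (deriv g rstar) rstar :=
        ((hg.differentiableOn (by simp)).differentiableAt hnhds).hasDerivAt
      have h1 := ((hasDerivAt_id rstar).sub_const rstar).mul hdg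
      have h2 : h =ᶠ[nhds rstar] (fun y => id y - rstar) * g :=
        Filter.eventually_of_mem hnhds hgh
      have h3 := (h1.congr_of_eventuallyEq h2).deriv
      simp at h3
      exact h3.symm
    have hg0 : ∀ r ∈ Ioo a b, g r ≠ 0 := by
      intro r hr' hz
      by_cases hrr : r = rstar
      · rw [hrr, hgc] at hz
        exact hc hz
      · exact hne r hr' hrr (by rw [hgh r hr', hz, mul_zero])
    have hsign : ∀ r ∈ Ioo a b, 0 < c / g r := by
      intro r hr'
      by_contra hle
      have hcont : ContinuousOn (fun y => c / g y) (Ioo a b) :=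
        continuousOn_const.div hg.continuousOn hg0
      have hmem : (0 : ℝ) ∈ Icc (c / g r) (c / g rstar) := by
        refine ⟨not_lt.1 hle, ?_⟩
        rw [hgc, div_self hc]
        exact zero_le_one
      obtain ⟨y, hy, hy0⟩ := isPreconnected_Ioo.intermediate_value hr' hr hcont hmem
      exact div_ne_zero hc (hg0 y hy) hy0
    obtain ⟨u, hu, hdu⟩ := exists_primitive_Ioo (p := fun r => -k r / g r) hr
      (hk.neg.div hg hg0)
    have hdf : ∀ r ∈ Ioo a b, HasDerivAt (fun r => (r - rstar) * Real.exp (u r))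
        (Real.exp (u r) * (c / g r)) r := by
      intro r hr'
      have h1 := ((hasDerivAt_id r).sub_const rstar).mul (hdu r hr').exp
      refine h1.congr_deriv ?_
      have h2 := hkg r hr'
      rw [hgc] at h2
      have h3 := hg0 r hr'
      dsimp only [id]
      field_simp
      linear_combination h2
    refine ⟨c⁻¹, fun r => (r - rstar) * Real.exp (u r), inv_ne_zero hc, ?_, ?_, ?_⟩
    · exact (contDiffOn_id.sub contDiffOn_const).mul hu.exp
    · intro r hr'
      rw [(hdf r hr').deriv]
      exact mul_pos (Real.exp_pos _) (hsign r hr')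
    · intro r hr'
      rw [(hdf r hr').deriv, hgh r hr']
      have h3 := hg0 r hr'
      field_simp
end

section
/- If K ∈ ℝ \ {0} and f : ℝ → ℝ is continuously differentiable on J with f'(r) > 0 for all r ∈ J and f(r) = K·h(r)·f'(r) for all r ∈ J, then K·h'(r*) = 1; in particular h'(r*) ≠ 0 and K = 1/h'(r*). -/
/-! Since `f` and `h` vanish at `rstar`, the ODE says that the slope of `f` at `rstar` is
`K * slope h * f'`. Letting `r → rstar` and using continuity of `f'` gives
`f'(rstar) = K * h'(rstar) * f'(rstar)`, and `f'(rstar) > 0` cancels. -/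

open Set

/-- If `f` is an increasing `C¹` solution of the horizon ODE `f = K·h·f'` on
`J = Ioo a b ⊆ (0,∞)` with `K ≠ 0`, then `K·h'(r*) = 1`; in particular `h'(r*) ≠ 0` and
`K = 1/h'(r*)`. -/
theorem stmt_1 (a b rstar : ℝ) (h : ℝ → ℝ)
    (hJ : Ioo a b ⊆ Ioi 0) (hr : rstar ∈ Ioo a b)
    (hdiff : DifferentiableAt ℝ h rstar) (h0 : h rstar = 0)
    (K : ℝ) (hK : K ≠ 0) (f : ℝ → ℝ)
    (hf : ContDiffOn ℝ 1 f (Ioo a b))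
    (hf' : ∀ r ∈ Ioo a b, 0 < deriv f r)
    (hode : ∀ r ∈ Ioo a b, f r = K * h r * deriv f r) :
    K * deriv h rstar = 1 ∧ deriv h rstar ≠ 0 ∧ K = 1 / deriv h rstar := by
  have hnhds : Ioo a b ∈ nhds rstar := isOpen_Ioo.mem_nhds hr
  have hf0 : f rstar = 0 := by rw [hode rstar hr, h0]; ring
  have hpos := hf' rstar hr
  have hcont : ContinuousAt (deriv f) rstar :=
    (hf.continuousOn_deriv_of_isOpen isOpen_Ioo le_rfl).continuousAt hnhds
  have hfs := hasDerivAt_iff_tendsto_slope.1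
    (differentiableAt_of_deriv_ne_zero hpos.ne').hasDerivAt
  have hhs := hasDerivAt_iff_tendsto_slope.1 hdiff.hasDerivAt
  have hprod := (hhs.const_mul K).mul (hcont.tendsto.mono_left nhdsWithin_le_nhds)
  -- As `f` and `h` vanish at `rstar`, dividing the ODE by `r - rstar` relates their slopes.
  have hslope : slope f rstar =ᶠ[nhdsWithin rstar {rstar}ᶜ]
      fun r => K * slope h rstar r * deriv f r := by
    filter_upwards [nhdsWithin_le_nhds hnhds] with r hrJ
    rw [slope_def_field, slope_def_field, hf0, h0, hode r hrJ]
    ring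
  have heq : deriv f rstar = K * deriv h rstar * deriv f rstar :=
    tendsto_nhds_unique (hfs.congr' hslope) hprod
  have hone : K * deriv h rstar = 1 :=
    mul_right_cancel₀ hpos.ne' (by rw [one_mul]; exact heq.symm)
  have hne : deriv h rstar ≠ 0 := right_ne_zero_of_mul_eq_one hone
  exact ⟨hone, hne, eq_one_div_of_mul_eq_one_left hone⟩
end

section
/- If f₁ and f₂ are both differentiable on J with f₁'(r) > 0 and f₂'(r) > 0 for all r ∈ J and both satisfy fⱼ(r) = K·h(r)·fⱼ'(r) for all r ∈ J (the same K ∈ ℝ \ {0}), then there exists a constant c > 0 such that f₂(r) = c·f₁(r) for all r ∈ J. That is, increasing solutions of the horizon ODE are unique up to positive scaling. -/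
/-!
The ODE `f = K h f'` forces `f(r*) = 0`, and `f ≠ 0` away from `r*`. Hence on each side of `r*`
the quotient `f₂ / f₁` is defined, and its derivative vanishes because
`f₂' f₁ - f₂ f₁' = K h (f₂' f₁' - f₂' f₁') = 0`, so it is constant there. A priori the constants on
the two sides could differ, since the ODE is singular at `r*`. They agree because
`f₂ / f₁` is the quotient of the difference quotients at `r*`, so both constants equal the limit
`f₂'(r*) / f₁'(r*)`, which is positive.
-/

open Set

/-- On a connected open set `S` that avoids the zero `p` of `f` and `g` but accumulates at it,
a vanishing Wronskian forces `g = (g'(p) / f'(p)) f`: the quotient `g / f` is constant on `S`, and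
its limit at `p` within `S` is `g'(p) / f'(p)`. -/
lemma eq_const_mul_of_wronskian_eq_zero {S : Set ℝ} {p : ℝ} {f g : ℝ → ℝ}
    (hSo : IsOpen S) (hSc : IsPreconnected S) (hpS : p ∉ S) [(nhdsWithin p S).NeBot]
    (hf : ∀ r ∈ S, DifferentiableAt ℝ f r) (hg : ∀ r ∈ S, DifferentiableAt ℝ g r)
    (hfp : DifferentiableAt ℝ f p) (hgp : DifferentiableAt ℝ g p)
    (hf0 : f p = 0) (hg0 : g p = 0) (hf' : deriv f p ≠ 0)
    (hfne : ∀ r ∈ S, f r ≠ 0)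
    (hW : ∀ r ∈ S, deriv g r * f r - g r * deriv f r = 0) :
    ∀ r ∈ S, g r = deriv g p / deriv f p * f r := by
  intro r hr
  have hconst : ∀ x ∈ S, g x / f x = g r / f r := by
    intro x hx
    refine hSo.is_const_of_deriv_eq_zero (f := fun x => g x / f x) hSc
      (fun y hy => ((hg y hy).div (hf y hy) (hfne y hy)).differentiableWithinAt) ?_ hx hr
    intro y hy
    have hd := ((hg y hy).hasDerivAt.div (hf y hy).hasDerivAt (hfne y hy)).deriv
    rw [hW y hy, zero_div] at hd
    exact hd
  have hle : nhdsWithin p S ≤ nhdsWithin p {p}ᶜ :=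
    nhdsWithin_mono p fun x hx hxp => hpS (hxp ▸ hx)
  have hlim := ((hasDerivAt_iff_tendsto_slope.1 hgp.hasDerivAt).div
    (hasDerivAt_iff_tendsto_slope.1 hfp.hasDerivAt) hf').mono_left hle
  have heq : (slope g p / slope f p) =ᶠ[nhdsWithin p S] fun _ => g r / f r := by
    filter_upwards [self_mem_nhdsWithin] with x hx
    have hxp : x - p ≠ 0 := sub_ne_zero.2 fun hxp => hpS (hxp ▸ hx)
    rw [← hconst x hx, Pi.div_apply, slope_def_field, slope_def_field, hf0, hg0, sub_zero, sub_zero,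
      div_div_div_cancel_right₀ hxp]
  have hc := tendsto_nhds_unique (hlim.congr' heq) tendsto_const_nhds
  rw [hc, div_mul_cancel₀ _ (hfne r hr)]

/-- Increasing solutions of the horizon ODE `f = K·h·f'` on
`J = Ioo a b ⊆ (0,∞)` (same `K ≠ 0`) are unique up to positive scaling. -/
theorem stmt_2 (a b rstar : ℝ) (h : ℝ → ℝ)
    (hJ : Ioo a b ⊆ Ioi 0) (hr : rstar ∈ Ioo a b)
    (hcont : ContinuousOn h (Ioo a b))
    (h0 : h rstar = 0) (hne : ∀ r ∈ Ioo a b, r ≠ rstar → h r ≠ 0)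
    (K : ℝ) (hK : K ≠ 0) (f₁ f₂ : ℝ → ℝ)
    (hf₁ : ∀ r ∈ Ioo a b, DifferentiableAt ℝ f₁ r)
    (hf₂ : ∀ r ∈ Ioo a b, DifferentiableAt ℝ f₂ r)
    (hf₁' : ∀ r ∈ Ioo a b, 0 < deriv f₁ r)
    (hf₂' : ∀ r ∈ Ioo a b, 0 < deriv f₂ r)
    (hode₁ : ∀ r ∈ Ioo a b, f₁ r = K * h r * deriv f₁ r)
    (hode₂ : ∀ r ∈ Ioo a b, f₂ r = K * h r * deriv f₂ r) :
    ∃ c : ℝ, 0 < c ∧ ∀ r ∈ Ioo a b, f₂ r = c * f₁ r := by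
  have hne₁ : ∀ r ∈ Ioo a b, r ≠ rstar → f₁ r ≠ 0 := fun r hrJ hrs => by
    rw [hode₁ r hrJ]
    exact mul_ne_zero (mul_ne_zero hK (hne r hrJ hrs)) (hf₁' r hrJ).ne'
  have h1 : f₁ rstar = 0 := by rw [hode₁ _ hr, h0]; ring
  have h2 : f₂ rstar = 0 := by rw [hode₂ _ hr, h0]; ring
  have hW : ∀ r ∈ Ioo a b, deriv f₂ r * f₁ r - f₂ r * deriv f₁ r = 0 := fun r hrJ => by
    rw [hode₁ r hrJ, hode₂ r hrJ]; ring
  have side : ∀ S ⊆ Ioo a b, IsOpen S → IsPreconnected S → rstar ∉ S →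
      (nhdsWithin rstar S).NeBot →
      ∀ r ∈ S, f₂ r = deriv f₂ rstar / deriv f₁ rstar * f₁ r :=
    fun S hS hSo hSc hpS _ =>
      eq_const_mul_of_wronskian_eq_zero hSo hSc hpS (fun r hrS => hf₁ r (hS hrS))
        (fun r hrS => hf₂ r (hS hrS)) (hf₁ _ hr) (hf₂ _ hr) h1 h2 (hf₁' _ hr).ne'
        (fun r hrS => hne₁ r (hS hrS) fun hrs => hpS (hrs ▸ hrS)) (fun r hrS => hW r (hS hrS))
  refine ⟨deriv f₂ rstar / deriv f₁ rstar, div_pos (hf₂' _ hr) (hf₁' _ hr), fun r hrJ => ?_⟩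
  rcases lt_trichotomy r rstar with hlt | rfl | hgt
  · exact side (Ioo a rstar) (Ioo_subset_Ioo_right hr.2.le) isOpen_Ioo isPreconnected_Ioo
      (fun hm => lt_irrefl _ hm.2) (right_nhdsWithin_Ioo_neBot hr.1) r ⟨hrJ.1, hlt⟩
  · rw [h1, h2, mul_zero]
  · exact side (Ioo rstar b) (Ioo_subset_Ioo_left hr.1.le) isOpen_Ioo isPreconnected_Ioo
      (fun hm => lt_irrefl _ hm.1) (left_nhdsWithin_Ioo_neBot hr.2) r ⟨hgt, hrJ.2⟩
end

section
/- Assume h'(r*) ≠ 0 and set K := 1/h'(r*). Then the function r ↦ (1 − K·h'(r))/h(r), defined on J \ {r*}, extends to a function φ : J → ℝ that is smooth on J, and this extension satisfies 1 = K·h'(r) + φ(r)·h(r) for all r ∈ J. -/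
open Set

/-!
By Hadamard's lemma, a smooth function `f` on an open interval factors as
`f x = f c + (x - c) * F x` with `F x = ∫ t in 0..1, f' (c + t (x - c))` smooth and `F c = f' c`.
Write `h x = (x - r*) * H x` and `1 - K * h' x = (x - r*) * F x`, both left-hand sides vanishing
at `r*`. The factor `H` has no zero: `H r* = h' r* ≠ 0`, and elsewhere `h ≠ 0`. So `φ = F / H`.

Smoothness of the integral follows by induction on the order, differentiating under the integral
sign: each derivative produces one more factor `t`, hence the weights `t ^ n` in `segInt`.
-/

/-- The weighted mean `∫₀¹ tⁿ g(c + t (x - c)) dt` of `g` along the segment from `c` to `x`. -/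
noncomputable def segInt (g : ℝ → ℝ) (c : ℝ) (n : ℕ) (x : ℝ) : ℝ :=
  ∫ t in (0 : ℝ)..1, t ^ n * g (c + t * (x - c))

theorem seg_mem_Icc {p q c x t : ℝ} (hc : c ∈ Icc p q) (hx : x ∈ Icc p q)
    (ht : t ∈ Icc (0 : ℝ) 1) : c + t * (x - c) ∈ Icc p q := by
  have h := (convex_Icc p q).add_smul_sub_mem hc hx ht
  simpa using h

theorem seg_mem_Ioo {a b c x t : ℝ} (hc : c ∈ Ioo a b) (hx : x ∈ Ioo a b)
    (ht : t ∈ Icc (0 : ℝ) 1) : c + t * (x - c) ∈ Ioo a b := by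
  have h := (convex_Ioo a b).add_smul_sub_mem hc hx ht
  simpa using h

theorem continuousOn_seg {a b c x : ℝ} {g : ℝ → ℝ} (n : ℕ) (hc : c ∈ Ioo a b)
    (hx : x ∈ Ioo a b) (hg : ContinuousOn g (Ioo a b)) :
    ContinuousOn (fun t : ℝ => t ^ n * g (c + t * (x - c))) (uIcc 0 1) := by
  rw [uIcc_of_le zero_le_one]
  refine (by fun_prop : ContinuousOn (fun t : ℝ => t ^ n) _).mul ?_
  exact hg.comp (by fun_prop) fun t ht => seg_mem_Ioo hc hx ht

theorem hasDerivAt_segInt {a b c x₀ : ℝ} {g : ℝ → ℝ} (n : ℕ) (hc : c ∈ Ioo a b)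
    (hx₀ : x₀ ∈ Ioo a b) (hg : DifferentiableOn ℝ g (Ioo a b))
    (hg' : ContinuousOn (deriv g) (Ioo a b)) :
    HasDerivAt (segInt g c n) (segInt (deriv g) c (n + 1) x₀) x₀ := by
  -- A compact subinterval containing `c` and a neighbourhood of `x₀`, on which `g'` is bounded.
  obtain ⟨p, hap, hp⟩ := exists_between (lt_min hc.1 hx₀.1)
  obtain ⟨q, hq, hqb⟩ := exists_between (max_lt hc.2 hx₀.2)
  rw [lt_min_iff] at hp
  rw [max_lt_iff] at hq
  have hsub : Icc p q ⊆ Ioo a b := fun y hy => ⟨hap.trans_le hy.1, hy.2.trans_lt hqb⟩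
  have hcI : c ∈ Icc p q := ⟨hp.1.le, hq.1.le⟩
  obtain ⟨M, hM⟩ := isCompact_Icc.exists_bound_of_continuousOn (hg'.mono hsub)
  have hint : ∀ {k : ℝ → ℝ} (m : ℕ) {x : ℝ}, ContinuousOn k (Ioo a b) → x ∈ Ioo a b →
      IntervalIntegrable (fun t : ℝ => t ^ m * k (c + t * (x - c))) MeasureTheory.volume 0 1 :=
    fun m _ hk hx => (continuousOn_seg m hc hx hk).intervalIntegrable
  have hIcc : ∀ {t : ℝ}, t ∈ uIoc (0 : ℝ) 1 → t ∈ Icc (0 : ℝ) 1 := fun {t} ht => by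
    rw [uIoc_of_le zero_le_one] at ht
    exact Ioc_subset_Icc_self ht
  refine (intervalIntegral.hasDerivAt_integral_of_dominated_loc_of_deriv_le
    (F := fun x t => t ^ n * g (c + t * (x - c)))
    (F' := fun x t => t ^ (n + 1) * deriv g (c + t * (x - c))) (bound := fun _ => M)
    (Ioo_mem_nhds hp.2 hq.2) ?_ (hint n hg.continuousOn hx₀)
    (intervalIntegrable_iff.1 (hint (n + 1) hg' hx₀)).aestronglyMeasurable ?_ (by simp) ?_).2
  · filter_upwards [Ioo_mem_nhds hx₀.1 hx₀.2] with x hx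
    exact (intervalIntegrable_iff.1 (hint n hg.continuousOn hx)).aestronglyMeasurable
  · refine Filter.Eventually.of_forall fun t ht x hx => ?_
    have ht' := hIcc ht
    have h1 := hM _ (seg_mem_Icc hcI (Ioo_subset_Icc_self hx) ht')
    rw [norm_mul, Real.norm_of_nonneg (pow_nonneg ht'.1 _)]
    exact (mul_le_of_le_one_left (norm_nonneg _) (pow_le_one₀ ht'.1 ht'.2)).trans h1
  · refine Filter.Eventually.of_forall fun t ht x hx => ?_
    have hmem := hsub (seg_mem_Icc hcI (Ioo_subset_Icc_self hx) (hIcc ht))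
    have h1 := (hg.differentiableAt (isOpen_Ioo.mem_nhds hmem)).hasDerivAt
    have h2 : HasDerivAt (fun x : ℝ => c + t * (x - c)) t x := by
      simpa using (((hasDerivAt_id x).sub_const c).const_mul t).const_add c
    refine ((h1.comp x h2).const_mul (t ^ n)).congr_deriv ?_
    ring

theorem contDiffOn_segInt {a b c : ℝ} (hc : c ∈ Ioo a b) (m : ℕ) :
    ∀ (g : ℝ → ℝ) (n : ℕ), ContDiffOn ℝ (⊤ : ℕ∞) g (Ioo a b) →
      ContDiffOn ℝ m (segInt g c n) (Ioo a b) := by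
  induction m with
  | zero =>
    intro g n hg
    obtain ⟨hd, hs⟩ := (contDiffOn_infty_iff_deriv_of_isOpen isOpen_Ioo).1 hg
    exact contDiffOn_zero.2 fun x hx =>
      (hasDerivAt_segInt n hc hx hd hs.continuousOn).continuousAt.continuousWithinAt
  | succ m ih =>
    intro g n hg
    obtain ⟨hd, hs⟩ := (contDiffOn_infty_iff_deriv_of_isOpen isOpen_Ioo).1 hg
    have hD := fun x hx => hasDerivAt_segInt (x₀ := x) n hc hx hd hs.continuousOn
    rw [Nat.cast_succ, contDiffOn_succ_iff_deriv_of_isOpen isOpen_Ioo]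
    refine ⟨fun x hx => (hD x hx).differentiableAt.differentiableWithinAt, ?_, ?_⟩
    · intro h
      exact absurd h (by simp)
    · exact (ih (deriv g) (n + 1) hs).congr fun x hx => (hD x hx).deriv

/-- **Hadamard's lemma** on an open interval. -/
theorem hadamard_factor {a b c : ℝ} {f : ℝ → ℝ} (hc : c ∈ Ioo a b)
    (hf : ContDiffOn ℝ (⊤ : ℕ∞) f (Ioo a b)) :
    ∃ F : ℝ → ℝ, ContDiffOn ℝ (⊤ : ℕ∞) F (Ioo a b) ∧ F c = deriv f c ∧
      ∀ x ∈ Ioo a b, f x = f c + (x - c) * F x := by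
  obtain ⟨hd, hs⟩ := (contDiffOn_infty_iff_deriv_of_isOpen isOpen_Ioo).1 hf
  refine ⟨segInt (deriv f) c 0, contDiffOn_infty.2 fun m => contDiffOn_segInt hc m _ _ hs,
    by simp [segInt], fun x hx => ?_⟩
  have hderiv : ∀ t ∈ uIcc (0 : ℝ) 1, HasDerivAt (fun t : ℝ => f (c + t * (x - c)))
      ((x - c) * (t ^ 0 * deriv f (c + t * (x - c)))) t := by
    intro t ht
    rw [uIcc_of_le zero_le_one] at ht
    have h1 := (hd.differentiableAt (isOpen_Ioo.mem_nhds (seg_mem_Ioo hc hx ht))).hasDerivAt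
    have h2 : HasDerivAt (fun t : ℝ => c + t * (x - c)) (x - c) t := by
      simpa using ((hasDerivAt_id t).mul_const (x - c)).const_add c
    refine (h1.comp t h2).congr_deriv ?_
    ring
  have hFTC := intervalIntegral.integral_eq_sub_of_hasDerivAt hderiv
    ((continuousOn_seg 0 hc hx hs.continuousOn).intervalIntegrable.const_mul (x - c))
  rw [intervalIntegral.integral_const_mul] at hFTC
  simp only [one_mul, zero_mul, add_zero, add_sub_cancel] at hFTC
  rw [segInt, hFTC]
  ring

/-- If `h'(r*) ≠ 0` and `K := 1/h'(r*)`, then `r ↦ (1 − K·h'(r))/h(r)` on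
`J \ {r*}` extends to a smooth function `φ` on `J` with `1 = K·h'(r) + φ(r)·h(r)` on `J`. -/
theorem stmt_3 (a b rstar : ℝ) (h : ℝ → ℝ)
    (hJ : Ioo a b ⊆ Ioi 0) (hr : rstar ∈ Ioo a b)
    (hsm : ContDiffOn ℝ (⊤ : ℕ∞) h (Ioo a b))
    (h0 : h rstar = 0) (hne : ∀ r ∈ Ioo a b, r ≠ rstar → h r ≠ 0)
    (hd : deriv h rstar ≠ 0) :
    ∃ φ : ℝ → ℝ, ContDiffOn ℝ (⊤ : ℕ∞) φ (Ioo a b) ∧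
      (∀ r ∈ Ioo a b, r ≠ rstar →
        φ r = (1 - (1 / deriv h rstar) * deriv h r) / h r) ∧
      (∀ r ∈ Ioo a b, 1 = (1 / deriv h rstar) * deriv h r + φ r * h r) := by
  obtain ⟨-, hs⟩ := (contDiffOn_infty_iff_deriv_of_isOpen isOpen_Ioo).1 hsm
  obtain ⟨H, hH, hHc, hHeq⟩ := hadamard_factor hr hsm
  have hf : ContDiffOn ℝ (⊤ : ℕ∞) (fun r => 1 - (1 / deriv h rstar) * deriv h r) (Ioo a b) :=
    contDiffOn_const.sub (contDiffOn_const.mul hs)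
  obtain ⟨F, hF, -, hFeq⟩ := hadamard_factor hr hf
  have hf0 : 1 - (1 / deriv h rstar) * deriv h rstar = 0 := by
    rw [one_div_mul_cancel hd, sub_self]
  simp only [hf0, zero_add] at hFeq
  simp only [h0, zero_add] at hHeq
  have hH0 : ∀ r ∈ Ioo a b, H r ≠ 0 := by
    intro r hrJ
    by_cases hrr : r = rstar
    · rw [hrr, hHc]
      exact hd
    · intro hz
      exact hne r hrJ hrr (by rw [hHeq r hrJ, hz, mul_zero])
  refine ⟨fun r => F r / H r, hF.div hH hH0, fun r hrJ hrr => ?_, fun r hrJ => ?_⟩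
  · rw [hFeq r hrJ, hHeq r hrJ, mul_div_mul_left _ _ (sub_ne_zero.2 hrr)]
  · have h1 : F r / H r * h r = (r - rstar) * F r := by
      rw [hHeq r hrJ]
      field_simp [hH0 r hrJ]
    rw [h1, ← hFeq r hrJ]
    ring
end

section
/- Let K ∈ ℝ \ {0} and let R : ℝ → ℝ be differentiable on J with 1 = K·h'(r) + R'(r)·h(r) for all r ∈ J. Then the function f : J → ℝ defined by f(r) := h(r)·exp(R(r)/K) is differentiable on J with f'(r) = exp(R(r)/K)/K for all r ∈ J, and f satisfies the horizon ODE f(r) = K·h(r)·f'(r) for all r ∈ J. -/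
open Set

/-- If `1 = K·h' + R'·h` on `J = Ioo a b ⊆ (0,∞)` with `K ≠ 0`, then
`f(r) := h(r)·exp(R(r)/K)` is differentiable on `J` with `f'(r) = exp(R(r)/K)/K`, and `f`
satisfies the horizon ODE `f = K·h·f'` on `J`. -/
theorem stmt_4 (a b : ℝ) (h R : ℝ → ℝ)
    (hJ : Ioo a b ⊆ Ioi 0)
    (hh : ∀ r ∈ Ioo a b, DifferentiableAt ℝ h r)
    (K : ℝ) (hK : K ≠ 0)
    (hR : ∀ r ∈ Ioo a b, DifferentiableAt ℝ R r)
    (hRode : ∀ r ∈ Ioo a b, 1 = K * deriv h r + deriv R r * h r) :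
    (∀ r ∈ Ioo a b,
        HasDerivAt (fun r => h r * Real.exp (R r / K)) (Real.exp (R r / K) / K) r) ∧
      (∀ r ∈ Ioo a b,
        h r * Real.exp (R r / K) =
          K * h r * deriv (fun r => h r * Real.exp (R r / K)) r) := by
  have key : ∀ r ∈ Ioo a b,
      HasDerivAt (fun r => h r * Real.exp (R r / K)) (Real.exp (R r / K) / K) r := by
    intro r hr
    have hd := (hh r hr).hasDerivAt.mul (((hR r hr).hasDerivAt.div_const K).exp)
    -- The product rule gives `exp (R / K) * (K * h' + R' * h) / K`, and the bracket is `1`.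
    refine hd.congr_deriv ?_
    have e := hRode r hr
    field_simp
    linear_combination -e
  refine ⟨key, fun r hr => ?_⟩
  rw [(key r hr).deriv]
  field_simp
end

section
/- Assume h'(r*) ≠ 0, set K := 1/h'(r*), and let φ : J → ℝ be the smooth extension to J of r ↦ (1 − K·h'(r))/h(r). Then the function f : J → ℝ defined by f(r) := K·h(r)·exp((1/K)·∫_{r*}^{r} φ(s) ds) is smooth on J, satisfies f'(r) = exp((1/K)·∫_{r*}^{r} φ(s) ds) > 0 for all r ∈ J, satisfies f'(r*) = 1, and satisfies the horizon ODE f(r) = K·h(r)·f'(r) for all r ∈ J. -/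
/-! The primitive `I r = ∫_{r*}^r φ` is smooth on `J` with `I' = φ`, so `f = K·h·exp(I/K)` is smooth
and the product rule gives `f' = (K·h' + h·φ)·exp(I/K)`. The bracket is identically `1` on `J`: off
`r*` this is the defining equation of `φ`, and at `r*` it holds because `h r* = 0` and
`K = 1/h'(r*)`. Hence `f' = exp(I/K)`, from which the remaining claims are immediate. -/

open Set

/-- With `h'(r*) ≠ 0`, `K := 1/h'(r*)` and `φ` the smooth extension of
`(1 − K·h')/h` to `J`, the function `f(r) := K·h(r)·exp((1/K)·∫_{r*}^r φ)` is smooth on `J`,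
has derivative `exp((1/K)·∫_{r*}^r φ) > 0`, satisfies `f'(r*) = 1`, and solves the horizon
ODE `f = K·h·f'` on `J`. -/
theorem stmt_5 (a b rstar : ℝ) (h φ : ℝ → ℝ)
    (hJ : Ioo a b ⊆ Ioi 0) (hr : rstar ∈ Ioo a b)
    (hsm : ContDiffOn ℝ (⊤ : ℕ∞) h (Ioo a b))
    (h0 : h rstar = 0) (hne : ∀ r ∈ Ioo a b, r ≠ rstar → h r ≠ 0)
    (hd : deriv h rstar ≠ 0)
    (K : ℝ) (hKdef : K = 1 / deriv h rstar)
    (hφ : ContDiffOn ℝ (⊤ : ℕ∞) φ (Ioo a b))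
    (hφeq : ∀ r ∈ Ioo a b, r ≠ rstar → φ r = (1 - K * deriv h r) / h r)
    (f : ℝ → ℝ)
    (hfdef : ∀ r, f r = K * h r * Real.exp ((1 / K) * ∫ s in rstar..r, φ s)) :
    ContDiffOn ℝ (⊤ : ℕ∞) f (Ioo a b) ∧
      (∀ r ∈ Ioo a b,
        HasDerivAt f (Real.exp ((1 / K) * ∫ s in rstar..r, φ s)) r ∧
          0 < Real.exp ((1 / K) * ∫ s in rstar..r, φ s)) ∧
      deriv f rstar = 1 ∧
      (∀ r ∈ Ioo a b, f r = K * h r * deriv f r) := by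
  have hcont : ContinuousOn φ (Ioo a b) := hφ.continuousOn
  have hI : ∀ r ∈ Ioo a b, HasDerivAt (fun r => ∫ s in rstar..r, φ s) (φ r) r := by
    intro r hrJ
    have hsub : uIcc rstar r ⊆ Ioo a b := (ordConnected_Ioo).uIcc_subset hr hrJ
    exact intervalIntegral.integral_hasDerivAt_right
      ((hcont.mono hsub).intervalIntegrable)
      (hcont.stronglyMeasurableAtFilter isOpen_Ioo r hrJ)
      (hcont.continuousAt (isOpen_Ioo.mem_nhds hrJ))
  have hIsm : ContDiffOn ℝ (⊤ : ℕ∞) (fun r => ∫ s in rstar..r, φ s) (Ioo a b) := by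
    rw [contDiffOn_infty_iff_deriv_of_isOpen isOpen_Ioo]
    exact ⟨fun r hrJ => (hI r hrJ).differentiableAt.differentiableWithinAt,
      hφ.congr fun r hrJ => (hI r hrJ).deriv⟩
  have hone : ∀ r ∈ Ioo a b, K * deriv h r + h r * φ r = 1 := by
    intro r hrJ
    by_cases hrr : r = rstar
    · subst hrr
      rw [h0, hKdef]
      field_simp
      ring
    · have hh := hne r hrJ hrr
      rw [hφeq r hrJ hrr]
      field_simp
      ring
  have hK : K ≠ 0 := by
    rw [hKdef]
    exact one_div_ne_zero hd
  obtain rfl : f = fun r => K * h r * Real.exp ((1 / K) * ∫ s in rstar..r, φ s) := funext hfdef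
  have hf : ∀ r ∈ Ioo a b, HasDerivAt
      (fun r => K * h r * Real.exp ((1 / K) * ∫ s in rstar..r, φ s))
      (Real.exp ((1 / K) * ∫ s in rstar..r, φ s)) r := by
    intro r hrJ
    have hh : HasDerivAt h (deriv h r) r :=
      ((hsm.contDiffAt (isOpen_Ioo.mem_nhds hrJ)).differentiableAt (by simp)).hasDerivAt
    refine ((hh.const_mul K).mul (((hI r hrJ).const_mul (1 / K)).exp)).congr_deriv ?_
    have hinv : K * (1 / K) = 1 := mul_one_div_cancel hK
    linear_combination (Real.exp ((1 / K) * ∫ s in rstar..r, φ s)) * hone r hrJ +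
      h r * φ r * Real.exp ((1 / K) * ∫ s in rstar..r, φ s) * hinv
  refine ⟨(contDiffOn_const.mul hsm).mul (contDiffOn_const.mul hIsm).exp,
    fun r hrJ => ⟨hf r hrJ, Real.exp_pos _⟩, ?_, fun r hrJ => ?_⟩
  · rw [(hf rstar hr).deriv]
    simp
  · rw [(hf r hrJ).deriv]
end

section
/- Let k ≥ 1. Assume h is of class C^k on J, that h is (k+1)-times differentiable on some open neighborhood of r* contained in J, and that h'(r*) ≠ 0; set K := 1/h'(r*). Then the function r ↦ (1 − K·h'(r))/h(r) on J \ {r*} extends to a C^{k−1} function φ on J, and the function f(r) := K·h(r)·exp((1/K)·∫_{r*}^{r} φ(s) ds) is of class C^{k+1} on J, has f'(r) > 0 for all r ∈ J, and satisfies the horizon ODE f(r) = K·h(r)·f'(r) for all r ∈ J. -/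
/-!
Write `c` for the zero of `h`. Hadamard's lemma in a sharp low-regularity form carries the proof:
if `N` is `C^m` on `J` and `N^(m)` is differentiable at the single point `c`, then
`N x = N c + (x - c) * q x` with `q` of class `C^m` on `J`. To see this, subtract a polynomial `P`
(the Taylor polynomial of order `m + 1`) so that `R = N - P` satisfies
`R^(j) = o((x - c)^(m + 1 - j))` for all `j ≤ m`; polynomials divide exactly, and the derivatives
of `R / (x - c)^i` are combinations of quotients `R^(j) / (x - c)^l` that are still continuous
at `c`.

Applied to `h` and to `h'` with `m = k - 1`, this gives `h = (x - c) * g` and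
`h' = h' c + (x - c) * q` with `g`, `q` of class `C^(k-1)` and `g` nowhere zero, so
`(1 - K * h') / h` extends to `φ = -K * q / g`. Since `K * h' + h * φ = 1` on all of `J`, the
function `f = K * h * E`, with `E = exp (K⁻¹ * ∫ φ)`, has `f' = E`. Now `E` is positive and of
class `C^k`, so `f` is of class `C^(k+1)`, and `f = K * h * f'`.
-/

open Set Filter Topology Asymptotics

/-- `FlatAt c J m e R`: on `J`, the function `R` has continuous derivatives `R^(j)` for `j ≤ m`,
and `R^(j) x = o((x - c)^(m - j + e))` as `x → c`. The recursion is on the order `m`. -/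
def FlatAt (c : ℝ) (J : Set ℝ) : ℕ → ℕ → (ℝ → ℝ) → Prop
  | 0, e, R => ContinuousOn R J ∧ R =o[𝓝 c] (fun x => (x - c) ^ e)
  | m + 1, e, R => R =o[𝓝 c] (fun x => (x - c) ^ (m + 1 + e)) ∧
      ∃ R' : ℝ → ℝ, (∀ x ∈ J, HasDerivAt R (R' x) x) ∧ FlatAt c J m e R'

theorem FlatAt.isLittleO {c : ℝ} {J : Set ℝ} {m e : ℕ} {R : ℝ → ℝ} (hR : FlatAt c J m e R) :
    R =o[𝓝 c] (fun x => (x - c) ^ (m + e)) := by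
  cases m with
  | zero => simpa using hR.2
  | succ m => exact hR.1

theorem eq_zero_of_isLittleO_pow {c : ℝ} {n : ℕ} {R : ℝ → ℝ}
    (hR : R =o[𝓝 c] (fun x => (x - c) ^ n)) : R c = 0 := by
  have h1 : R =o[𝓝 c] (fun _ => (1 : ℝ)) := by
    have hcont : ContinuousAt (fun x : ℝ => (x - c) ^ n) c := by fun_prop
    exact hR.trans_isBigO (hcont.tendsto.isBigO_one ℝ)
  exact tendsto_nhds_unique (tendsto_pure_nhds R c)
    (((isLittleO_one_iff ℝ).1 h1).mono_left (pure_le_nhds c))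

/-- One order of differentiability can be traded for one more order of flatness. -/
theorem FlatAt.lower {c : ℝ} {J : Set ℝ} {m : ℕ} : ∀ {e : ℕ} {R : ℝ → ℝ},
    FlatAt c J (m + 1) e R → FlatAt c J m (e + 1) R := by
  induction m with
  | zero =>
    rintro e R ⟨h1, R', h2, -⟩
    refine ⟨fun x hx => (h2 x hx).continuousAt.continuousWithinAt, ?_⟩
    simpa [add_comm] using h1
  | succ m ih =>
    rintro e R ⟨h1, R', h2, h3⟩
    refine ⟨?_, R', h2, ih h3⟩
    convert h1 using 3
    ring

/-- With the convention `0⁻¹ = 0`, the quotient takes the value `0` at `c` (as `R c = 0`). -/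
theorem FlatAt.contDiffOn_div {c : ℝ} {J : Set ℝ} (hJ : IsOpen J) {m : ℕ} :
    ∀ {i : ℕ} {R : ℝ → ℝ}, FlatAt c J m i R →
      ContDiffOn ℝ m (fun x => R x / (x - c) ^ i) J := by
  induction m with
  | zero =>
    rintro i R ⟨h1, h2⟩
    rw [Nat.cast_zero, contDiffOn_zero]
    intro x hx
    rcases eq_or_ne x c with rfl | hxc
    · apply ContinuousAt.continuousWithinAt
      have := h2.tendsto_div_nhds_zero
      simpa [ContinuousAt, eq_zero_of_isLittleO_pow h2] using this
    · exact (h1 x hx).div (by fun_prop) (pow_ne_zero _ (sub_ne_zero.2 hxc))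
  | succ m ih =>
    intro i R hR
    have hlow := ih hR.lower
    have hRc := eq_zero_of_isLittleO_pow hR.isLittleO
    have hRo := hR.isLittleO
    obtain ⟨-, R', h2, h3⟩ := hR
    have hR'c := eq_zero_of_isLittleO_pow h3.isLittleO
    have key : ∀ x ∈ J, HasDerivAt (fun x => R x / (x - c) ^ i)
        (R' x / (x - c) ^ i - i * (R x / (x - c) ^ (i + 1))) x := by
      intro x hx
      rcases eq_or_ne x c with rfl | hxc
      -- At `c` the claimed derivative is `0`, and the difference quotient is `R / (x - c) ^ (i + 1)`.
      · rw [hRc, hR'c, hasDerivAt_iff_isLittleO]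
        simp only [hRc, zero_div, sub_zero, mul_zero, smul_zero]
        have hRi : R =o[𝓝 x] (fun y => (y - x) ^ (i + 1)) := by
          refine hRo.trans_isBigO ?_
          have : (fun y : ℝ => (y - x) ^ (m + 1 + i)) =
              fun y => (y - x) ^ m * (y - x) ^ (i + 1) := by
            ext y; ring
          rw [this]
          have hcont : ContinuousAt (fun y : ℝ => (y - x) ^ m) x := by fun_prop
          simpa using (hcont.tendsto.isBigO_one ℝ).mul
            (isBigO_refl (fun y : ℝ => (y - x) ^ (i + 1)) _)
        rw [isLittleO_iff_tendsto]
        · refine hRi.tendsto_div_nhds_zero.congr fun y => ?_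
          rw [pow_succ, div_div]
        · intro y hy
          rw [sub_eq_zero.1 hy, hRc, zero_div]
      · have hne : x - c ≠ 0 := sub_ne_zero.2 hxc
        have hp : HasDerivAt (fun x => (x - c) ^ i) (i * (x - c) ^ (i - 1)) x := by
          simpa using ((hasDerivAt_id x).sub_const c).fun_pow i
        refine ((h2 x hx).fun_div hp (pow_ne_zero _ hne)).congr_deriv ?_
        cases i with
        | zero => simp
        | succ i =>
          simp only [Nat.add_sub_cancel]
          field_simp
          ring
    rw [Nat.cast_add, Nat.cast_one, contDiffOn_succ_iff_deriv_of_isOpen hJ]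
    refine ⟨fun x hx => (key x hx).differentiableAt.differentiableWithinAt, by simp, ?_⟩
    refine ((ih h3).sub ((contDiffOn_const (c := (i : ℝ))).mul hlow)).congr fun x hx => ?_
    exact (key x hx).deriv

theorem exists_polynomial_antideriv (Q : Polynomial ℝ) :
    ∃ P : Polynomial ℝ, P.derivative = Q := by
  induction Q using Polynomial.induction_on' with
  | add p q hp hq =>
    obtain ⟨P, rfl⟩ := hp
    obtain ⟨P', rfl⟩ := hq
    exact ⟨P + P', Polynomial.derivative_add⟩
  | monomial n a =>
    refine ⟨Polynomial.monomial (n + 1) (a / (n + 1)), ?_⟩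
    rw [Polynomial.derivative_monomial]
    push_cast
    rw [div_mul_cancel₀ _ (by positivity)]

/-- Peano's form of Taylor's theorem at order `m + 1`, for all derivatives up to order `m`
simultaneously. -/
theorem exists_polynomial_flatAt {c : ℝ} {J : Set ℝ} (hJ : IsOpen J) (hJc : Convex ℝ J)
    (hc : c ∈ J) {m : ℕ} : ∀ {N : ℝ → ℝ}, ContDiffOn ℝ m N J →
      DifferentiableAt ℝ (iteratedDeriv m N) c →
      ∃ P : Polynomial ℝ, FlatAt c J m 1 (fun x => N x - P.eval x) := by
  induction m with
  | zero =>
    intro N hN hd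
    rw [iteratedDeriv_zero] at hd
    refine ⟨Polynomial.C (N c) + Polynomial.C (deriv N c) * (Polynomial.X - Polynomial.C c),
      hN.continuousOn.sub (Polynomial.continuous _).continuousOn, ?_⟩
    have := hasDerivAt_iff_isLittleO.1 hd.hasDerivAt
    refine this.congr (fun x => ?_) (fun x => ?_)
    · simp; ring
    · simp
  | succ m ih =>
    intro N hN hd
    rw [Nat.cast_add, Nat.cast_one, contDiffOn_succ_iff_deriv_of_isOpen hJ] at hN
    rw [iteratedDeriv_succ'] at hd
    obtain ⟨Q, hQ⟩ := ih hN.2.2 hd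
    obtain ⟨P, rfl⟩ := exists_polynomial_antideriv Q
    have hder : ∀ x ∈ J, HasDerivAt
        (fun x => N x - (P + Polynomial.C (N c - P.eval c)).eval x)
        (deriv N x - P.derivative.eval x) x := by
      intro x hx
      have h1 := ((hN.1 x hx).differentiableAt (hJ.mem_nhds hx)).hasDerivAt
      have h2 := (P + Polynomial.C (N c - P.eval c)).hasDerivAt x
      simpa using h1.fun_sub h2
    -- The constant makes the remainder vanish at `c`, so its flatness follows by integration.
    refine ⟨P + Polynomial.C (N c - P.eval c), ?_, _, hder, hQ⟩
    have := hJc.isLittleO_pow_succ_real hc (fun x hx => (hder x hx).hasDerivWithinAt)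
      (hQ.isLittleO.mono nhdsWithin_le_nhds)
    rw [hJ.nhdsWithin_eq hc] at this
    simpa using this

/-- Hadamard's lemma: differentiability of the top derivative at `c` alone suffices for the
quotient to lose no order of smoothness. -/
theorem exists_contDiffOn_quotient {c : ℝ} {J : Set ℝ} (hJ : IsOpen J) (hJc : Convex ℝ J)
    (hc : c ∈ J) {m : ℕ} {N : ℝ → ℝ} (hN : ContDiffOn ℝ m N J)
    (hd : DifferentiableAt ℝ (iteratedDeriv m N) c) :
    ∃ q : ℝ → ℝ, ContDiffOn ℝ m q J ∧ ∀ x, N x = N c + (x - c) * q x := by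
  obtain ⟨P, hP⟩ := exists_polynomial_flatAt hJ hJc hc hN hd
  have hz := eq_zero_of_isLittleO_pow hP.isLittleO
  obtain ⟨Q, hQ⟩ := Polynomial.X_sub_C_dvd_sub_C_eval (a := c) (p := P)
  refine ⟨fun x => (N x - P.eval x) / (x - c) ^ 1 + Q.eval x,
    (hP.contDiffOn_div hJ).add (by simpa using (Q.contDiff_aeval (𝕜 := ℝ) m).contDiffOn), fun x => ?_⟩
  have hQx := congrArg (Polynomial.eval x) hQ
  simp only [Polynomial.eval_sub, Polynomial.eval_C, Polynomial.eval_mul, Polynomial.eval_X]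
    at hQx
  rcases eq_or_ne x c with rfl | hxc
  · simp
  · have hne : x - c ≠ 0 := sub_ne_zero.2 hxc
    simp only [pow_one]
    rw [mul_add, mul_div_cancel₀ _ hne, ← hQx]
    linarith

theorem hasDerivAt_sub_mul_of_continuousAt {c : ℝ} {g : ℝ → ℝ} (hg : ContinuousAt g c) :
    HasDerivAt (fun x => (x - c) * g x) (g c) c := by
  rw [hasDerivAt_iff_tendsto_slope]
  refine (hg.tendsto.mono_left nhdsWithin_le_nhds).congr' ?_
  filter_upwards [self_mem_nhdsWithin] with x hx
  have hne : x - c ≠ 0 := sub_ne_zero.2 hx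
  simp [slope_def_field, hne]

/-- Low-regularity version: if `h ∈ C^k(J)` (`k ≥ 1`) is `(k+1)`-times
differentiable near `r*` and `h'(r*) ≠ 0`, `K := 1/h'(r*)`, then `(1 − K·h')/h` extends to a
`C^{k−1}` function `φ` on `J`, and `f(r) := K·h(r)·exp((1/K)·∫_{r*}^r φ)` is `C^{k+1}` on `J`,
has positive derivative, and solves the horizon ODE `f = K·h·f'` on `J`. -/
theorem stmt_6 (a b rstar : ℝ) (h : ℝ → ℝ) (k : ℕ) (hk : 1 ≤ k)
    (hJ : Ioo a b ⊆ Ioi 0) (hr : rstar ∈ Ioo a b)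
    (h0 : h rstar = 0) (hne : ∀ r ∈ Ioo a b, r ≠ rstar → h r ≠ 0)
    (hCk : ContDiffOn ℝ (k : ℕ∞) h (Ioo a b))
    (U : Set ℝ) (hUopen : IsOpen U) (hUmem : rstar ∈ U) (hUsub : U ⊆ Ioo a b)
    (hdk : ∀ j ≤ k, DifferentiableOn ℝ (iteratedDeriv j h) U)
    (hd : deriv h rstar ≠ 0)
    (K : ℝ) (hKdef : K = 1 / deriv h rstar) :
    ∃ φ : ℝ → ℝ, ContDiffOn ℝ ((k - 1 : ℕ) : ℕ∞) φ (Ioo a b) ∧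
      (∀ r ∈ Ioo a b, r ≠ rstar → φ r = (1 - K * deriv h r) / h r) ∧
      ContDiffOn ℝ ((k + 1 : ℕ) : ℕ∞)
        (fun r => K * h r * Real.exp ((1 / K) * ∫ s in rstar..r, φ s)) (Ioo a b) ∧
      (∀ r ∈ Ioo a b,
        0 < deriv (fun r => K * h r * Real.exp ((1 / K) * ∫ s in rstar..r, φ s)) r) ∧
      (∀ r ∈ Ioo a b,
        K * h r * Real.exp ((1 / K) * ∫ s in rstar..r, φ s) =
          K * h r *
            deriv (fun r => K * h r * Real.exp ((1 / K) * ∫ s in rstar..r, φ s)) r) := by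
  have hJo : IsOpen (Ioo a b) := isOpen_Ioo
  obtain ⟨m, rfl⟩ : ∃ m, k = m + 1 := ⟨k - 1, by omega⟩
  have hh : ContDiffOn ℝ ((m : WithTop ℕ∞) + 1) h (Ioo a b) := by exact_mod_cast hCk
  have hh' := (contDiffOn_succ_iff_deriv_of_isOpen hJo).1 hh
  have hder : ∀ r ∈ Ioo a b, HasDerivAt h (deriv h r) r := fun r hr' =>
    ((hh'.1 r hr').differentiableAt (hJo.mem_nhds hr')).hasDerivAt
  have hdc : ∀ j ≤ m + 1, DifferentiableAt ℝ (iteratedDeriv j h) rstar := fun j hj =>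
    (hdk j hj rstar hUmem).differentiableAt (hUopen.mem_nhds hUmem)
  obtain ⟨g, hg, hgeq⟩ := exists_contDiffOn_quotient hJo (convex_Ioo a b) hr
    (hh.of_le le_self_add) (hdc m (by omega))
  obtain ⟨q, hq, hqeq⟩ := exists_contDiffOn_quotient hJo (convex_Ioo a b) hr hh'.2.2
    (by rw [← iteratedDeriv_succ']; exact hdc (m + 1) le_rfl)
  simp only [h0, zero_add] at hgeq
  have hgc : g rstar = deriv h rstar := by
    have h1 := hasDerivAt_sub_mul_of_continuousAt
      (hg.continuousOn.continuousAt (hJo.mem_nhds hr))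
    rw [← funext hgeq] at h1
    exact h1.deriv.symm
  have hg0 : ∀ r ∈ Ioo a b, g r ≠ 0 := by
    intro r hr' hz
    rcases eq_or_ne r rstar with rfl | hne'
    · exact hd (hgc ▸ hz)
    · exact hne r hr' hne' (by rw [hgeq, hz, mul_zero])
  have hK : K ≠ 0 := by rw [hKdef]; exact one_div_ne_zero hd
  have hKd : K * deriv h rstar = 1 := by rw [hKdef]; exact one_div_mul_cancel hd
  let φ : ℝ → ℝ := fun r => -K * q r / g r
  have hφ : ContDiffOn ℝ m φ (Ioo a b) := (contDiffOn_const.mul hq).div hg hg0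
  have hrel : ∀ r ∈ Ioo a b, K * deriv h r + h r * φ r = 1 := by
    intro r hr'
    have := hg0 r hr'
    rw [hqeq r, hgeq r]
    simp only [φ]
    field_simp
    linear_combination hKd
  have hint : ∀ r ∈ Ioo a b, HasDerivAt (fun r => ∫ s in rstar..r, φ s) (φ r) r := by
    intro r hr'
    refine intervalIntegral.integral_hasDerivAt_right
      (hφ.continuousOn.mono (ordConnected_Ioo.uIcc_subset hr hr')).intervalIntegrable
      (hφ.continuousOn.stronglyMeasurableAtFilter hJo r hr')
      (hφ.continuousOn.continuousAt (hJo.mem_nhds hr'))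
  have hIC : ContDiffOn ℝ ((m : WithTop ℕ∞) + 1) (fun r => ∫ s in rstar..r, φ s) (Ioo a b) := by
    rw [contDiffOn_succ_iff_deriv_of_isOpen hJo]
    exact ⟨fun r hr' => (hint r hr').differentiableAt.differentiableWithinAt, by simp,
      hφ.congr fun r hr' => (hint r hr').deriv⟩
  have hE : ContDiffOn ℝ ((m : WithTop ℕ∞) + 1)
      (fun r => Real.exp ((1 / K) * ∫ s in rstar..r, φ s)) (Ioo a b) :=
    (contDiffOn_const.mul hIC).exp
  have hf : ∀ r ∈ Ioo a b,
      HasDerivAt (fun r => K * h r * Real.exp ((1 / K) * ∫ s in rstar..r, φ s))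
        (Real.exp ((1 / K) * ∫ s in rstar..r, φ s)) r := by
    intro r hr'
    refine (((hder r hr').const_mul K).mul
      ((hint r hr').const_mul (1 / K)).exp).congr_deriv ?_
    field_simp
    linear_combination hrel r hr'
  refine ⟨φ, by simpa using hφ, ?_, ?_, ?_, ?_⟩
  · intro r hr' hne'
    rw [eq_div_iff (hne r hr' hne')]
    linear_combination hrel r hr'
  · have : ContDiffOn ℝ (((m : WithTop ℕ∞) + 1) + 1)
        (fun r => K * h r * Real.exp ((1 / K) * ∫ s in rstar..r, φ s)) (Ioo a b) := by
      rw [contDiffOn_succ_iff_deriv_of_isOpen hJo]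
      exact ⟨fun r hr' => (hf r hr').differentiableAt.differentiableWithinAt, by simp,
        hE.congr fun r hr' => (hf r hr').deriv⟩
    exact_mod_cast this
  · intro r hr'
    rw [(hf r hr').deriv]
    exact Real.exp_pos _
  · intro r hr'
    rw [(hf r hr').deriv]
end

section
/- Let k ≥ 0, ε > 0, r₀ ∈ ℝ, and let f, g : (r₀ − ε, r₀ + ε) → ℝ be (k+1)-times differentiable functions such that f(r₀) = 0, g(r₀) = 0, g(r) ≠ 0 for all r ∈ (r₀ − ε, r₀ + ε) \ {r₀}, and g'(r₀) ≠ 0. Then the function p(r) := f(r)/g(r), defined on (r₀ − ε, r₀ + ε) \ {r₀}, extends to a function on (r₀ − ε, r₀ + ε) that is k-times continuously differentiable. -/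
/-!
The quotient is `(f / (r - r₀)) / (g / (r - r₀))`, so it suffices that the difference quotient
`dslope f r₀` is `C^k` when `f` is `(k+1)`-times differentiable: the denominator `dslope g r₀` is
nonzero on the whole interval, with value `g'(r₀)` at `r₀`.

For this, write `f` as a polynomial in `r - r₀` plus a remainder `R`, where by Peano's form of
Taylor's theorem `R^(j) = o((r - r₀)^(k+1-j))` for `j ≤ k` (`exists_flat_sub_polynomial`; the
`(k+1)`-st derivative of `f` need not be continuous). Dividing by `r - r₀` lowers all exponents by
one (`Flat.div`), so the `j`-th derivative of `R / (r - r₀)` is `o((r - r₀)^(k-j))`, and a function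
with this property which vanishes at `r₀` is `C^k` there (`Flat.contDiffOn`).
-/

open Set Filter Topology Asymptotics Polynomial

/-- `Flat I c k n u` says that `u` is `C^k` on the punctured set `I \ {c}` and that
`u^(j)(x) = o((x - c)^(n-j))` as `x → c`, `x ≠ c`, for all `j ≤ k`. The exponents are integers and
may be negative; the value `u c` plays no role. -/
def Flat (I : Set ℝ) (c : ℝ) : ℕ → ℤ → (ℝ → ℝ) → Prop
  | 0, n, u => ContinuousOn u (I \ {c}) ∧ u =o[𝓝[≠] c] fun x => (x - c) ^ n
  | k + 1, n, u => DifferentiableOn ℝ u (I \ {c}) ∧ (u =o[𝓝[≠] c] fun x => (x - c) ^ n) ∧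
      Flat I c k (n - 1) (deriv u)

section

variable {I : Set ℝ} {c : ℝ}

lemma isOpen_punctured (hI : IsOpen I) : IsOpen (I \ {c}) := hI.sdiff isClosed_singleton

lemma punctured_mem (hI : IsOpen I) (hc : c ∈ I) : I \ {c} ∈ 𝓝[≠] c :=
  sdiff_mem_nhdsWithin_compl (hI.mem_nhds hc) _

lemma Flat.isLittleO {k : ℕ} {n : ℤ} {u : ℝ → ℝ} (h : Flat I c k n u) :
    u =o[𝓝[≠] c] fun x => (x - c) ^ n := by
  cases k with
  | zero => exact h.2
  | succ k => exact h.2.1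

lemma Flat.congr (hI : IsOpen I) (hc : c ∈ I) {k : ℕ} : ∀ {n : ℤ} {u v : ℝ → ℝ},
    Flat I c k n u → EqOn v u (I \ {c}) → Flat I c k n v := by
  induction k with
  | zero =>
    intro n u v h huv
    exact ⟨h.1.congr huv,
      h.2.congr' ((eventually_of_mem (punctured_mem hI hc) huv).mono fun _ h => h.symm) .rfl⟩
  | succ k ih =>
    intro n u v h huv
    exact ⟨h.1.congr huv,
      h.2.1.congr' ((eventually_of_mem (punctured_mem hI hc) huv).mono fun _ h => h.symm) .rfl,
      ih h.2.2 (huv.deriv (isOpen_punctured hI))⟩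

lemma Flat.sub (hI : IsOpen I) (hc : c ∈ I) {k : ℕ} : ∀ {n : ℤ} {u v : ℝ → ℝ},
    Flat I c k n u → Flat I c k n v → Flat I c k n (fun x => u x - v x) := by
  induction k with
  | zero => exact fun hu hv => ⟨hu.1.sub hv.1, hu.2.sub hv.2⟩
  | succ k ih =>
    intro n u v hu hv
    refine ⟨hu.1.sub hv.1, hu.2.1.sub hv.2.1, (ih hu.2.2 hv.2.2).congr hI hc fun x hx => ?_⟩
    have hx' := (isOpen_punctured hI).mem_nhds hx
    exact deriv_fun_sub (hu.1.differentiableAt hx') (hv.1.differentiableAt hx')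

lemma Flat.of_succ {k : ℕ} : ∀ {n : ℤ} {u : ℝ → ℝ}, Flat I c (k + 1) n u → Flat I c k n u := by
  induction k with
  | zero => exact fun h => ⟨h.1.continuousOn, h.2.1⟩
  | succ k ih => exact fun h => ⟨h.1, h.2.1, ih h.2.2⟩

lemma isLittleO_div_sub {n : ℤ} {u : ℝ → ℝ} (h : u =o[𝓝[≠] c] fun x => (x - c) ^ n) :
    (fun x => u x / (x - c)) =o[𝓝[≠] c] fun x => (x - c) ^ (n - 1) := by
  have h1 := h.mul_isBigO (isBigO_refl (fun x : ℝ => (x - c)⁻¹) (𝓝[≠] c))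
  refine h1.congr' (.of_forall fun x => (div_eq_mul_inv _ _).symm) ?_
  filter_upwards [self_mem_nhdsWithin] with x hx
  exact (zpow_sub_one₀ (sub_ne_zero.2 hx) n).symm

lemma Flat.div (hI : IsOpen I) (hc : c ∈ I) {k : ℕ} : ∀ {n : ℤ} {u : ℝ → ℝ},
    Flat I c k n u → Flat I c k (n - 1) (fun x => u x / (x - c)) := by
  induction k with
  | zero =>
    exact fun h => ⟨h.1.div (by fun_prop) fun x hx => sub_ne_zero.2 hx.2, isLittleO_div_sub h.2⟩
  | succ k ih =>
    intro n u h
    refine ⟨h.1.div (by fun_prop) fun x hx => sub_ne_zero.2 hx.2, isLittleO_div_sub h.2.1, ?_⟩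
    -- `(u / (x - c))' = u' / (x - c) - (u / (x - c)) / (x - c)`
    refine ((ih h.2.2).sub hI hc (ih (ih h.of_succ))).congr hI hc fun x hx => ?_
    have hx0 : x - c ≠ 0 := sub_ne_zero.2 hx.2
    have hd := (h.1.differentiableAt ((isOpen_punctured hI).mem_nhds hx)).hasDerivAt
    rw [(hd.fun_div ((hasDerivAt_id' x).sub_const c) hx0).deriv]
    field_simp

lemma Flat.contDiffOn (hI : IsOpen I) (hc : c ∈ I) {k : ℕ} : ∀ {u : ℝ → ℝ},
    Flat I c k k u → u c = 0 → ContDiffOn ℝ k u I := by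
  induction k with
  | zero =>
    intro u h hu
    rw [Nat.cast_zero, contDiffOn_zero]
    intro x hx
    by_cases hxc : x = c
    · subst hxc
      refine ContinuousAt.continuousWithinAt (continuousAt_iff_punctured_nhds.2 ?_)
      rw [hu]
      exact (isLittleO_one_iff ℝ).1 (by simpa using h.2)
    · exact (h.1.continuousAt ((isOpen_punctured hI).mem_nhds ⟨hx, hxc⟩)).continuousWithinAt
  | succ k ih =>
    intro u h hu
    have hder : HasDerivAt u 0 c := by
      rw [hasDerivAt_iff_tendsto_slope, ← isLittleO_one_iff ℝ]
      have h1 := isLittleO_div_sub h.2.1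
      have h2 : (fun x => u x / (x - c)) =o[𝓝[≠] c] fun x => (x - c) ^ k := by
        simpa using h1
      refine (h2.trans_isBigO ?_).congr_left fun x => by simp [slope_def_field, hu]
      refine ((?_ : ContinuousAt (fun x : ℝ => (x - c) ^ k) c).tendsto.mono_left
        nhdsWithin_le_nhds).isBigO_one ℝ
      fun_prop
    have h3 : Flat I c k k (deriv u) := by simpa using h.2.2
    rw [Nat.cast_succ, contDiffOn_succ_iff_deriv_of_isOpen hI]
    refine ⟨fun x hx => ?_, by simp, ih h3 hder.deriv⟩
    by_cases hxc : x = c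
    · subst hxc
      exact hder.differentiableAt.differentiableWithinAt
    · exact (h.1.differentiableAt
        ((isOpen_punctured hI).mem_nhds ⟨hx, hxc⟩)).differentiableWithinAt

/-- By the mean value inequality, estimates `o((x - c)^n)` can be integrated. -/
lemma isLittleO_of_deriv {n : ℕ} {u : ℝ → ℝ} (hd : ∀ᶠ x in 𝓝 c, DifferentiableAt ℝ u x)
    (hu : u c = 0) (hu' : deriv u c = 0) (h : deriv u =o[𝓝[≠] c] fun x => (x - c) ^ n) :
    u =o[𝓝[≠] c] fun x => (x - c) ^ (n + 1) := by
  refine IsLittleO.of_bound fun C hC => ?_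
  have h1 : ∀ᶠ x in 𝓝 c, ‖deriv u x‖ ≤ C * ‖(x - c) ^ n‖ := by
    filter_upwards [eventually_nhdsWithin_iff.1 (h.bound hC)] with x hx
    by_cases hxc : x = c
    · rw [hxc, hu', norm_zero]
      positivity
    · exact hx hxc
  obtain ⟨δ, hδ, hb⟩ := Metric.eventually_nhds_iff.1 (hd.and h1)
  refine nhdsWithin_le_nhds (Metric.eventually_nhds_iff.2 ⟨δ, hδ, fun x hx => ?_⟩)
  have hball : ∀ y ∈ Metric.closedBall c (dist x c), ‖deriv u y‖ ≤ C * ‖x - c‖ ^ n := by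
    intro y hy
    refine (hb ((Metric.mem_closedBall.1 hy).trans_lt hx)).2.trans ?_
    rw [norm_pow]
    have : ‖y - c‖ ≤ ‖x - c‖ := by simpa only [Metric.mem_closedBall, dist_eq_norm] using hy
    gcongr
  have hxm : x ∈ Metric.closedBall c (dist x c) := Metric.mem_closedBall.2 le_rfl
  have key := (convex_closedBall c (dist x c)).norm_image_sub_le_of_norm_deriv_le
    (fun y hy => (hb ((Metric.mem_closedBall.1 hy).trans_lt hx)).1) hball
    (Metric.mem_closedBall_self dist_nonneg) hxm
  rw [hu, sub_zero] at key
  rw [norm_pow, pow_succ, ← mul_assoc]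
  exact key

lemma exists_derivative_eq (p : ℝ[X]) : ∃ q : ℝ[X], derivative q = p := by
  induction p using Polynomial.induction_on' with
  | add p q hp hq =>
    obtain ⟨a, rfl⟩ := hp
    obtain ⟨b, rfl⟩ := hq
    exact ⟨a + b, by simp⟩
  | monomial n a =>
    refine ⟨monomial (n + 1) (a / (n + 1)), ?_⟩
    have : (n + 1 : ℝ) ≠ 0 := by positivity
    rw [derivative_monomial]
    simp [this]

lemma hasDerivAt_eval_sub (P : ℝ[X]) (x : ℝ) :
    HasDerivAt (fun y => P.eval (y - c)) ((derivative P).eval (x - c)) x := by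
  simpa using (P.hasDerivAt (x - c)).comp_sub_const x c

/-- Taylor's theorem with Peano remainder, with estimates for the derivatives of the remainder. -/
lemma exists_flat_sub_polynomial (hI : IsOpen I) (hc : c ∈ I) (k : ℕ) : ∀ f : ℝ → ℝ,
    (∀ j ≤ k, DifferentiableOn ℝ (iteratedDeriv j f) I) →
    ∃ P : ℝ[X], P.eval 0 = f c ∧ Flat I c k (k + 1) (fun x => f x - P.eval (x - c)) := by
  induction k with
  | zero =>
    intro f hf
    have hf0 : DifferentiableOn ℝ f I := by simpa using hf 0 le_rfl
    refine ⟨C (f c) + C (deriv f c) * X, by simp, ?_, ?_⟩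
    · exact (hf0.continuousOn.mono sdiff_subset).sub (by fun_prop)
    · have h := (hf0.differentiableAt (hI.mem_nhds hc)).hasDerivAt
      rw [hasDerivAt_iff_isLittleO] at h
      refine (h.mono nhdsWithin_le_nhds).congr (fun x => ?_) fun x => by simp
      simp
      ring
  | succ k ih =>
    intro f hf
    have hf0 : DifferentiableOn ℝ f I := by simpa using hf 0 (Nat.zero_le _)
    obtain ⟨Q, hQ, hflat⟩ := ih (deriv f) fun j hj => by
      rw [← iteratedDeriv_succ']
      exact hf (j + 1) (by omega)
    obtain ⟨P₀, hP₀⟩ := exists_derivative_eq Q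
    -- the antiderivative of `Q` with the right constant term
    set P : ℝ[X] := P₀ + C (f c - P₀.eval 0) with hP
    have hPQ : derivative P = Q := by simp [hP, hP₀]
    have hPc : P.eval 0 = f c := by simp [hP]
    have hder : ∀ x ∈ I, HasDerivAt (fun x => f x - P.eval (x - c))
        (deriv f x - Q.eval (x - c)) x := fun x hx => by
      rw [← hPQ]
      exact (hf0.differentiableAt (hI.mem_nhds hx)).hasDerivAt.fun_sub (hasDerivAt_eval_sub P x)
    have hflat' : Flat I c k (k + 1) (deriv fun x => f x - P.eval (x - c)) :=
      hflat.congr hI hc fun x hx => (hder x hx.1).deriv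
    refine ⟨P, hPc, fun x hx => (hder x hx.1).differentiableAt.differentiableWithinAt, ?_, ?_⟩
    · have h := isLittleO_of_deriv (n := k + 1)
        (eventually_of_mem (hI.mem_nhds hc) fun x hx => (hder x hx).differentiableAt)
        (by simp [hPc]) (by rw [(hder c hc).deriv]; simp [hQ]) (by exact_mod_cast hflat'.isLittleO)
      exact_mod_cast h
    · simpa using hflat'

lemma contDiffOn_dslope (hI : IsOpen I) (hc : c ∈ I) (k : ℕ) (f : ℝ → ℝ)
    (hf : ∀ j ≤ k, DifferentiableOn ℝ (iteratedDeriv j f) I) (hfc : f c = 0) :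
    ContDiffOn ℝ k (dslope f c) I := by
  obtain ⟨P, hPc, hflat⟩ := exists_flat_sub_polynomial hI hc k f hf
  obtain ⟨Q, rfl⟩ : X ∣ P := by
    rw [X_dvd_iff, coeff_zero_eq_eval_zero, hPc, hfc]
  have hf0 : DifferentiableOn ℝ f I := by simpa using hf 0 (Nat.zero_le _)
  have hQ : ContDiff ℝ k fun x => Q.eval (x - c) :=
    (by simpa using Q.contDiff_aeval (𝕜 := ℝ) k : ContDiff ℝ k fun x => Q.eval x).comp
      (contDiff_id.sub contDiff_const)
  set u : ℝ → ℝ := fun x => dslope f c x - Q.eval (x - c) with hu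
  have hflat' : Flat I c k k u := by
    have h1 := hflat.div hI hc
    rw [add_sub_cancel_right] at h1
    refine h1.congr hI hc fun x hx => ?_
    have hx0 : x - c ≠ 0 := sub_ne_zero.2 hx.2
    simp only [hu, dslope_of_ne _ hx.2, slope_def_field, hfc, eval_mul, eval_X]
    field_simp
    ring
  have huc : u c = 0 := by
    have hcont : ContinuousAt u c :=
      (continuousAt_dslope_same.2 (hf0.differentiableAt (hI.mem_nhds hc))).sub
        hQ.continuous.continuousAt
    refine tendsto_nhds_unique (hcont.tendsto.mono_left nhdsWithin_le_nhds)
      ((isLittleO_one_iff ℝ).1 (hflat'.isLittleO.trans_isBigO ?_) : Tendsto u (𝓝[≠] c) (𝓝 0))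
    simp only [zpow_natCast]
    refine ((?_ : ContinuousAt (fun x : ℝ => (x - c) ^ k) c).tendsto.mono_left
      nhdsWithin_le_nhds).isBigO_one ℝ
    fun_prop
  refine ((hflat'.contDiffOn hI hc huc).add hQ.contDiffOn).congr fun x _ => ?_
  simp [hu]

end

/-- Higher-order l'Hôpital: if `f, g` are `(k+1)`-times differentiable on
`(r₀−ε, r₀+ε)` with `f(r₀) = g(r₀) = 0`, `g ≠ 0` off `r₀`, and `g'(r₀) ≠ 0`, then
`p := f/g` (defined off `r₀`) extends to a `C^k` function on `(r₀−ε, r₀+ε)`. -/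
theorem stmt_8 (k : ℕ) (ε r₀ : ℝ) (hε : 0 < ε) (f g : ℝ → ℝ)
    (hf : ∀ j ≤ k, DifferentiableOn ℝ (iteratedDeriv j f) (Ioo (r₀ - ε) (r₀ + ε)))
    (hg : ∀ j ≤ k, DifferentiableOn ℝ (iteratedDeriv j g) (Ioo (r₀ - ε) (r₀ + ε)))
    (hf0 : f r₀ = 0) (hg0 : g r₀ = 0)
    (hgne : ∀ r ∈ Ioo (r₀ - ε) (r₀ + ε), r ≠ r₀ → g r ≠ 0)
    (hg' : deriv g r₀ ≠ 0) :
    ∃ p : ℝ → ℝ, ContDiffOn ℝ (k : ℕ∞) p (Ioo (r₀ - ε) (r₀ + ε)) ∧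
      ∀ r ∈ Ioo (r₀ - ε) (r₀ + ε), r ≠ r₀ → p r = f r / g r := by
  have hc : r₀ ∈ Ioo (r₀ - ε) (r₀ + ε) := ⟨by linarith, by linarith⟩
  refine ⟨fun x => dslope f r₀ x / dslope g r₀ x, ?_, fun r hr hne => ?_⟩
  · refine (contDiffOn_dslope isOpen_Ioo hc k f hf hf0).fun_div
      (contDiffOn_dslope isOpen_Ioo hc k g hg hg0) fun x hx => ?_
    by_cases hxc : x = r₀
    · rwa [hxc, dslope_same]
    · rw [dslope_of_ne _ hxc, slope_def_field, hg0, sub_zero]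
      exact div_ne_zero (hgne x hx hxc) (sub_ne_zero.2 hxc)
  · have h0 : r - r₀ ≠ 0 := sub_ne_zero.2 hne
    simp only [dslope_of_ne _ hne, slope_def_field, hf0, hg0, sub_zero]
    exact div_div_div_cancel_right₀ h0 _ _
end

section
/- Assume h'(r*) ≠ 0, set K := 1/h'(r*), and let f : ℝ → ℝ be continuously differentiable on J with f'(r) > 0 for all r ∈ J and f(r) = K·h(r)·f'(r) for all r ∈ J. Define the tortoise function R*(r) := K·ln|f(r)| for r ∈ J \ {r*}. Then R* is differentiable on J \ {r*} with (R*)'(r) = 1/h(r) for all r ∈ J \ {r*}, and R*(r) − K·ln|r − r*| converges to K·ln(f'(r*)) as r → r* (r ∈ J \ {r*}). -/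
/-!
Off the horizon `f ≠ 0`, so the chain rule gives `(K log |f|)' = K f' / f`, which the ODE turns
into `1 / h`. At the horizon the ODE forces `f rstar = 0`, hence
`K log |f r| - K log |r - rstar|` is `K` times the logarithm of the slope of `f` between `rstar`
and `r`; the slope tends to `deriv f rstar > 0`, where the logarithm is continuous.
-/

open Set

/-- The tortoise function `R*(r) := K·ln|f(r)|` of an increasing `C¹` solution
`f` of the horizon ODE (with `K = 1/h'(r*)`) has derivative `1/h` off `r*`, and
`R*(r) − K·ln|r − r*| → K·ln(f'(r*))` as `r → r*` within `J \ {r*}`. -/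
theorem stmt_9 (a b rstar : ℝ) (h : ℝ → ℝ)
    (hJ : Ioo a b ⊆ Ioi 0) (hr : rstar ∈ Ioo a b)
    (hcont : ContinuousOn h (Ioo a b))
    (h0 : h rstar = 0) (hne : ∀ r ∈ Ioo a b, r ≠ rstar → h r ≠ 0)
    (hd : deriv h rstar ≠ 0)
    (K : ℝ) (hKdef : K = 1 / deriv h rstar)
    (f : ℝ → ℝ) (hf : ContDiffOn ℝ 1 f (Ioo a b))
    (hf' : ∀ r ∈ Ioo a b, 0 < deriv f r)
    (hode : ∀ r ∈ Ioo a b, f r = K * h r * deriv f r) :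
    (∀ r ∈ Ioo a b, r ≠ rstar →
        HasDerivAt (fun r => K * Real.log |f r|) (1 / h r) r) ∧
      Filter.Tendsto (fun r => K * Real.log |f r| - K * Real.log |r - rstar|)
        (nhdsWithin rstar (Ioo a b \ {rstar}))
        (nhds (K * Real.log (deriv f rstar))) := by
  have hK : K ≠ 0 := by rw [hKdef]; exact one_div_ne_zero hd
  have hfd : ∀ r ∈ Ioo a b, HasDerivAt f (deriv f r) r := fun r hrJ =>
    (differentiableAt_of_deriv_ne_zero (hf' r hrJ).ne').hasDerivAt
  have hf0 : f rstar = 0 := by rw [hode rstar hr, h0]; ring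
  have hfne : ∀ r ∈ Ioo a b, r ≠ rstar → f r ≠ 0 := fun r hrJ hrs => by
    rw [hode r hrJ]
    exact mul_ne_zero (mul_ne_zero hK (hne r hrJ hrs)) (hf' r hrJ).ne'
  simp only [Real.log_abs]
  refine ⟨fun r hrJ hrs => ?_, ?_⟩
  · have hlog := ((hfd r hrJ).log (hfne r hrJ hrs)).const_mul K
    have h1 := hne r hrJ hrs
    have h2 := (hf' r hrJ).ne'
    have heq : K * (deriv f r / f r) = 1 / h r := by
      rw [hode r hrJ]
      field_simp
    rwa [heq] at hlog
  · have hslope := (hasDerivAt_iff_tendsto_slope.1 (hfd rstar hr)).mono_left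
      (nhdsWithin_mono rstar (fun x hx => hx.2 : Ioo a b \ {rstar} ⊆ {rstar}ᶜ))
    refine ((hslope.log (hf' rstar hr).ne').const_mul K).congr' ?_
    filter_upwards [self_mem_nhdsWithin] with r hrm
    rw [slope_def_field, hf0, sub_zero,
      Real.log_div (hfne r hrm.1 hrm.2) (sub_ne_zero.2 hrm.2), mul_sub]
end

section
/- Let K ∈ ℝ \ {0} and let f : ℝ → ℝ be continuously differentiable on J with f'(r) > 0 for all r ∈ J and f(r) = K·h(r)·f'(r) for all r ∈ J. Let u > 0 and v > 0 with u·v ∈ f(J), and set ρ := f⁻¹(u·v). Then h(ρ) ≠ 0, and for all a, b ∈ ℝ the isometry (pullback) identity holds: −h(ρ)·K²·(b/v − a/u)² + (1/h(ρ))·K²·h(ρ)²·(a/u + b/v)² = (4K/f'(ρ))·a·b. (The left-hand side is the Lorentzian line element −h dτ² + h⁻¹ dρ² evaluated on the image under the differential of Ψ(u,v) = (K·ln(v/u), f⁻¹(uv)) of the tangent vector (a,b); the right-hand side is the Kruskal–Szekeres line element F(ρ)(du⊗dv + dv⊗du) with F = 2K/f' evaluated on (a,b).) -/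
open Set

/-- For `u, v > 0` with `u·v ∈ f(J)` and `ρ := finv(u·v)`: `h(ρ) ≠ 0` and the
pullback of the line element `−h dτ² + h⁻¹ dρ²` under `Ψ(u,v) = (K·ln(v/u), f⁻¹(uv))`,
evaluated on a tangent vector `(A,B)`, equals the Kruskal–Szekeres line element
`(4K/f'(ρ))·A·B`. -/
theorem stmt_11 (a b rstar : ℝ) (h : ℝ → ℝ)
    (hJ : Ioo a b ⊆ Ioi 0) (hr : rstar ∈ Ioo a b)
    (hcont : ContinuousOn h (Ioo a b))
    (h0 : h rstar = 0) (hne : ∀ r ∈ Ioo a b, r ≠ rstar → h r ≠ 0)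
    (K : ℝ) (hK : K ≠ 0)
    (f : ℝ → ℝ) (hf : ContDiffOn ℝ 1 f (Ioo a b))
    (hf' : ∀ r ∈ Ioo a b, 0 < deriv f r)
    (hode : ∀ r ∈ Ioo a b, f r = K * h r * deriv f r)
    (finv : ℝ → ℝ)
    (hinv₁ : ∀ r ∈ Ioo a b, finv (f r) = r)
    (hinv₂ : ∀ y ∈ f '' Ioo a b, finv y ∈ Ioo a b ∧ f (finv y) = y)
    (u v : ℝ) (hu : 0 < u) (hv : 0 < v) (huv : u * v ∈ f '' Ioo a b)
    (ρ : ℝ) (hρ : ρ = finv (u * v)) :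
    h ρ ≠ 0 ∧
      ∀ A B : ℝ,
        -h ρ * K ^ 2 * (B / v - A / u) ^ 2 +
            (1 / h ρ) * K ^ 2 * (h ρ) ^ 2 * (A / u + B / v) ^ 2 =
          (4 * K / deriv f ρ) * A * B := by
  -- The horizon ODE at `ρ` reads `u * v = K * h ρ * f' ρ`; positivity of `u * v` forces `h ρ ≠ 0`.
  obtain ⟨hmem, hfρ⟩ := hinv₂ _ huv
  rw [← hρ] at hmem hfρ
  have key : u * v = K * h ρ * deriv f ρ := hfρ ▸ hode ρ hmem
  have hd : deriv f ρ ≠ 0 := (hf' ρ hmem).ne'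
  have hh : h ρ ≠ 0 := by
    intro hz
    rw [hz, mul_zero, zero_mul] at key
    exact (mul_pos hu hv).ne' key
  refine ⟨hh, fun A B => ?_⟩
  -- By polarization the left-hand side is `4 * h ρ * K ^ 2 * A * B / (u * v)`.
  calc _ = 4 * h ρ * K ^ 2 * A * B / (u * v) := by
        field_simp
        ring
    _ = 4 * K / deriv f ρ * A * B := by
        rw [key]
        field_simp
end

section
/- Let J = (a, b) ⊆ (0, ∞) be an open interval, r* ∈ J, and let f : J → ℝ be continuous and strictly increasing with f(r*) = 0; let K ∈ ℝ \ {0}. Then the map ψ(u, v) := (K·ln(v/u), f⁻¹(u·v)) is a bijection from the set Q₁ := {(u, v) ∈ ℝ² : u > 0, v > 0, u·v ∈ f((r*, b))} onto ℝ × (r*, b), where f⁻¹ denotes the inverse of the restriction of f to J. -/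
open Set

/-!
On the open first quadrant, `(u, v)` is determined by the ratio `v / u` and the product `u * v`.
Since `K ≠ 0`, the first coordinate `K * log (v / u)` carries the same information as the ratio,
and since `f` is injective, `f⁻¹ (u * v)` carries the same information as the product.
Conversely, as `f` is positive on `(r*, b)`, the point `(τ, ρ)` is the image of
`(√(f ρ) * exp (-τ / (2K)), √(f ρ) * exp (τ / (2K)))`.
-/

/-- A point of the open first quadrant is determined by its product and its ratio. -/
lemma eq_of_mul_eq_of_div_eq {u v u' v' : ℝ} (hu : 0 < u) (hv : 0 < v) (hu' : 0 < u')
    (hv' : 0 < v') (hmul : u * v = u' * v') (hdiv : v / u = v' / u') : u = u' ∧ v = v' := by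
  rw [div_eq_div_iff hu.ne' hu'.ne'] at hdiv
  have hsq : v ^ 2 = v' ^ 2 := by
    apply mul_left_cancel₀ (mul_pos hu hu').ne'
    linear_combination (v * u') * hmul + (u' * v') * hdiv
  have hvv : v = v' := (sq_eq_sq₀ hv.le hv'.le).1 hsq
  subst hvv
  exact ⟨mul_right_cancel₀ hv.ne' hmul, rfl⟩

/-- The map `ψ(u,v) := (K·ln(v/u), f⁻¹(u·v))` is a bijection from the first
quadrant `Q₁ = {(u,v) : u > 0, v > 0, u·v ∈ f((r*,b))}` of the generalized Kruskal–Szekeres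
plane onto `ℝ × (r*, b)`, where `f : (a,b) → ℝ` is continuous, strictly increasing, with
`f(r*) = 0`, and `finv` is the inverse of `f|_{(a,b)}`. -/
theorem stmt_12 (a b rstar K : ℝ) (f finv : ℝ → ℝ)
    (hJ : Ioo a b ⊆ Ioi 0) (hr : rstar ∈ Ioo a b)
    (hfc : ContinuousOn f (Ioo a b)) (hmono : StrictMonoOn f (Ioo a b))
    (hf0 : f rstar = 0) (hK : K ≠ 0)
    (hinv₁ : ∀ r ∈ Ioo a b, finv (f r) = r)
    (hinv₂ : ∀ y ∈ f '' Ioo a b, finv y ∈ Ioo a b ∧ f (finv y) = y) :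
    Set.BijOn (fun p : ℝ × ℝ => (K * Real.log (p.2 / p.1), finv (p.1 * p.2)))
      {p : ℝ × ℝ | 0 < p.1 ∧ 0 < p.2 ∧ p.1 * p.2 ∈ f '' Ioo rstar b}
      (Set.univ ×ˢ Ioo rstar b) := by
  have hsub : Ioo rstar b ⊆ Ioo a b := Ioo_subset_Ioo_left hr.1.le
  refine ⟨?_, ?_, ?_⟩
  · rintro ⟨u, v⟩ ⟨-, -, r, hrr, hfr⟩
    refine ⟨mem_univ _, ?_⟩
    change finv (u * v) ∈ Ioo rstar b
    change f r = u * v at hfr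
    rwa [← hfr, hinv₁ r (hsub hrr)]
  · rintro ⟨u, v⟩ ⟨hu, hv, hy⟩ ⟨u', v'⟩ ⟨hu', hv', hy'⟩ h
    dsimp only at hu hv hy hu' hv' hy' h
    obtain ⟨hlog, hfinv⟩ := Prod.mk.inj h
    have hmul : u * v = u' * v' := by
      rw [← (hinv₂ _ (image_mono hsub hy)).2, hfinv, (hinv₂ _ (image_mono hsub hy')).2]
    have hdiv : v / u = v' / u' :=
      Real.log_injOn_pos (div_pos hv hu) (div_pos hv' hu') (mul_left_cancel₀ hK hlog)
    obtain ⟨rfl, rfl⟩ := eq_of_mul_eq_of_div_eq hu hv hu' hv' hmul hdiv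
    rfl
  · rintro ⟨τ, ρ⟩ ⟨-, hρ⟩
    change ρ ∈ Ioo rstar b at hρ
    have hpos : 0 < f ρ := hf0 ▸ hmono hr (hsub hρ) hρ.1
    have hs : 0 < √(f ρ) := Real.sqrt_pos.2 hpos
    have hmul : √(f ρ) * Real.exp (-τ / (2 * K)) * (√(f ρ) * Real.exp (τ / (2 * K))) = f ρ := by
      rw [mul_mul_mul_comm, Real.mul_self_sqrt hpos.le, ← Real.exp_add, neg_div,
        neg_add_cancel, Real.exp_zero, mul_one]
    refine ⟨(√(f ρ) * Real.exp (-τ / (2 * K)), √(f ρ) * Real.exp (τ / (2 * K))),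
      ⟨by positivity, by positivity, ρ, hρ, hmul.symm⟩, ?_⟩
    refine Prod.ext ?_ ?_
    · dsimp only
      rw [mul_div_mul_left _ _ hs.ne', ← Real.exp_sub, Real.log_exp]
      field_simp
      ring
    · dsimp only
      rw [hmul, hinv₁ ρ (hsub hρ)]
end

section
/- Let K ∈ ℝ \ {0} and let f : ℝ → ℝ be twice continuously differentiable on J with f'(r) > 0 for all r ∈ J and f(r) = K·h(r)·f'(r) for all r ∈ J. Let I ⊆ ℝ be an open interval and u, v : I → ℝ twice differentiable with u(s)·v(s) ∈ f(J) for all s ∈ I. Define ρ(s) := f⁻¹(u(s)·v(s)) and λ(s) := (u(s)·v'(s) − u'(s)·v(s))/(ρ(s)·f'(ρ(s))). Assume that for all s ∈ I the second-order system holds: u''(s) = u'(s)²·v(s)·f''(ρ(s))/f'(ρ(s))² − λ(s)·u'(s) and v''(s) = v'(s)²·u(s)·f''(ρ(s))/f'(ρ(s))² + λ(s)·v'(s). Then λ is constant on I. -/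
/-!
With `N = u v' - u' v` and `D = ρ f'(ρ)`, so that `λ = N / D`, the second-order system gives
`N' = (u v)' (N f''(ρ) / f'(ρ)² + λ)`. Since `f(ρ) = u v`, the inverse function theorem gives
`(u v)' = f'(ρ) ρ'`, and substituting `N = λ D` turns this into
`N' = λ ρ' (f'(ρ) + ρ f''(ρ)) = λ D'`. As `D > 0`, this says `λ' = 0` on the interval.
-/

open Set

/-- A left inverse of a `C¹` function with nonvanishing derivative on an open set is
differentiable at the image points. -/
lemma hasDerivAt_leftInverse_of_contDiffOn {J : Set ℝ} (hJ : IsOpen J) {f g : ℝ → ℝ}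
    (hf : ContDiffOn ℝ 1 f J) (hg : ∀ r ∈ J, g (f r) = r) {r : ℝ} (hr : r ∈ J)
    (hf' : deriv f r ≠ 0) : HasDerivAt g (deriv f r)⁻¹ (f r) := by
  have hs : HasStrictDerivAt f (deriv f r) r :=
    (hf.contDiffAt (hJ.mem_nhds hr)).hasStrictDerivAt one_ne_zero
  exact (hs.to_local_left_inverse hf'
    (Filter.mem_of_superset (hJ.mem_nhds hr) hg)).hasDerivAt

/-- If the profile curve `(u,v)` of a symmetric photon surface satisfies the
second-order system in the generalized Kruskal–Szekeres coordinates, then the umbilicity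
factor `λ(s) = (u·v' − u'·v)/(ρ·f'(ρ))` is constant. -/
theorem stmt_13 (a b rstar K : ℝ) (h f finv : ℝ → ℝ)
    (hJ : Ioo a b ⊆ Ioi 0) (hr : rstar ∈ Ioo a b)
    (hcont : ContinuousOn h (Ioo a b))
    (h0 : h rstar = 0) (hne : ∀ r ∈ Ioo a b, r ≠ rstar → h r ≠ 0)
    (hK : K ≠ 0)
    (hf : ContDiffOn ℝ 2 f (Ioo a b))
    (hf' : ∀ r ∈ Ioo a b, 0 < deriv f r)
    (hode : ∀ r ∈ Ioo a b, f r = K * h r * deriv f r)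
    (hinv₁ : ∀ r ∈ Ioo a b, finv (f r) = r)
    (hinv₂ : ∀ y ∈ f '' Ioo a b, finv y ∈ Ioo a b ∧ f (finv y) = y)
    (c d : ℝ) (u v : ℝ → ℝ)
    (hu : ∀ s ∈ Ioo c d, DifferentiableAt ℝ u s ∧ DifferentiableAt ℝ (deriv u) s)
    (hv : ∀ s ∈ Ioo c d, DifferentiableAt ℝ v s ∧ DifferentiableAt ℝ (deriv v) s)
    (hmem : ∀ s ∈ Ioo c d, u s * v s ∈ f '' Ioo a b)
    (ρ lam : ℝ → ℝ)
    (hρ : ∀ s, ρ s = finv (u s * v s))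
    (hlam : ∀ s, lam s = (u s * deriv v s - deriv u s * v s) / (ρ s * deriv f (ρ s)))
    (hsys : ∀ s ∈ Ioo c d,
      deriv (deriv u) s =
          (deriv u s) ^ 2 * v s * deriv (deriv f) (ρ s) / (deriv f (ρ s)) ^ 2 -
            lam s * deriv u s ∧
        deriv (deriv v) s =
          (deriv v s) ^ 2 * u s * deriv (deriv f) (ρ s) / (deriv f (ρ s)) ^ 2 +
            lam s * deriv v s) :
    ∀ s₁ ∈ Ioo c d, ∀ s₂ ∈ Ioo c d, lam s₁ = lam s₂ := by
  have hderiv : ∀ s ∈ Ioo c d, HasDerivAt lam 0 s := by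
    intro s hs
    obtain ⟨hmemρ, hfρ⟩ := hinv₂ _ (hmem s hs)
    rw [← hρ] at hmemρ hfρ
    have hF := hf' _ hmemρ
    have hρpos : 0 < ρ s := hJ hmemρ
    have hdf : HasDerivAt (deriv f) (deriv (deriv f) (ρ s)) (ρ s) := by
      have h1 : ContDiffOn ℝ 1 (deriv f) (Ioo a b) := hf.deriv_of_isOpen isOpen_Ioo (by norm_num)
      exact ((h1.differentiableOn one_ne_zero).differentiableAt
        (isOpen_Ioo.mem_nhds hmemρ)).hasDerivAt
    have hU := (hu s hs).1.hasDerivAt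
    have hU' := (hu s hs).2.hasDerivAt
    have hV := (hv s hs).1.hasDerivAt
    have hV' := (hv s hs).2.hasDerivAt
    have hinv : HasDerivAt finv (deriv f (ρ s))⁻¹ (u s * v s) := by
      have := hasDerivAt_leftInverse_of_contDiffOn isOpen_Ioo (hf.of_le (by norm_num))
        hinv₁ hmemρ hF.ne'
      rwa [hfρ] at this
    have hρd : HasDerivAt ρ ((deriv f (ρ s))⁻¹ * (deriv u s * v s + u s * deriv v s)) s := by
      have := hinv.comp s (hU.mul hV)
      rwa [← show ρ = finv ∘ (u * v) from funext hρ] at this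
    have hN := (hU.mul hV').sub (hU'.mul hV)
    have hD := hρd.mul (hdf.comp s hρd)
    have hD0 : ρ s * deriv f (ρ s) ≠ 0 := (mul_pos hρpos hF).ne'
    have hq := hN.div hD hD0
    have hlam' : lam = (u * deriv v - deriv u * v) / (ρ * (deriv f ∘ ρ)) := funext hlam
    rw [← hlam'] at hq
    refine hq.congr_deriv ?_
    obtain ⟨e1, e2⟩ := hsys s hs
    simp only [Pi.mul_apply, Pi.sub_apply, Function.comp_apply]
    rw [e1, e2, hlam s]
    have := hF.ne'
    have := hρpos.ne'
    field_simp
    ring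
  intro s₁ h₁ s₂ h₂
  exact isOpen_Ioo.is_const_of_deriv_eq_zero isPreconnected_Ioo
    (fun s hs => (hderiv s hs).differentiableAt.differentiableWithinAt)
    (fun s hs => (hderiv s hs).deriv) h₁ h₂
end

section
/- Let K ∈ ℝ \ {0} and let f : ℝ → ℝ be continuously differentiable on J with f'(r) > 0 for all r ∈ J and f(r) = K·h(r)·f'(r) for all r ∈ J. Let I ⊆ ℝ be an open interval and u, v : I → ℝ differentiable with u(s)·v(s) ∈ f(J) for all s ∈ I. Define ρ(s) := f⁻¹(u(s)·v(s)) and λ(s) := (u(s)·v'(s) − u'(s)·v(s))/(ρ(s)·f'(ρ(s))), and assume the proper-time normalization (4K/f'(ρ(s)))·u'(s)·v'(s) = −1 for all s ∈ I. Then ρ is differentiable on I with ρ'(s) = (u'(s)·v(s) + u(s)·v'(s))/f'(ρ(s)), and ρ'(s)² = ρ(s)²·λ(s)² − h(ρ(s)) for all s ∈ I. -/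
/-!
Since `f` is `C¹` with positive derivative, `HasStrictDerivAt.to_local_left_inverse` gives
`(f⁻¹)' = 1 / f'(ρ)` at `uv`, and the chain rule yields `ρ' = (uv)' / f'(ρ)`. The energy identity is
then the polarization `(u'v + uv')² - (uv' - u'v)² = 4 (uv)(u'v')`: its right-hand side equals
`-h(ρ) f'(ρ)²`, by `uv = f(ρ) = K h(ρ) f'(ρ)` and the proper-time normalization.
-/


open Set

/-- For a profile curve `(u,v)` of a symmetric photon surface parametrized by
proper time (`(4K/f'(ρ))·u'·v' = −1`), the radius `ρ(s) = f⁻¹(u(s)·v(s))` is differentiable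
with `ρ' = (u'·v + u·v')/f'(ρ)` and satisfies `(ρ')² = ρ²·λ² − h(ρ)`. -/
theorem stmt_14 (a b rstar K : ℝ) (h f finv : ℝ → ℝ)
    (hJ : Ioo a b ⊆ Ioi 0) (hr : rstar ∈ Ioo a b)
    (hcont : ContinuousOn h (Ioo a b))
    (h0 : h rstar = 0) (hne : ∀ r ∈ Ioo a b, r ≠ rstar → h r ≠ 0)
    (hK : K ≠ 0)
    (hf : ContDiffOn ℝ 1 f (Ioo a b))
    (hf' : ∀ r ∈ Ioo a b, 0 < deriv f r)
    (hode : ∀ r ∈ Ioo a b, f r = K * h r * deriv f r)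
    (hinv₁ : ∀ r ∈ Ioo a b, finv (f r) = r)
    (hinv₂ : ∀ y ∈ f '' Ioo a b, finv y ∈ Ioo a b ∧ f (finv y) = y)
    (c d : ℝ) (u v : ℝ → ℝ)
    (hu : ∀ s ∈ Ioo c d, DifferentiableAt ℝ u s)
    (hv : ∀ s ∈ Ioo c d, DifferentiableAt ℝ v s)
    (hmem : ∀ s ∈ Ioo c d, u s * v s ∈ f '' Ioo a b)
    (ρ lam : ℝ → ℝ)
    (hρ : ∀ s, ρ s = finv (u s * v s))
    (hlam : ∀ s, lam s = (u s * deriv v s - deriv u s * v s) / (ρ s * deriv f (ρ s)))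
    (hnorm : ∀ s ∈ Ioo c d, (4 * K / deriv f (ρ s)) * deriv u s * deriv v s = -1) :
    ∀ s ∈ Ioo c d,
      HasDerivAt ρ ((deriv u s * v s + u s * deriv v s) / deriv f (ρ s)) s ∧
        (deriv ρ s) ^ 2 = (ρ s) ^ 2 * (lam s) ^ 2 - h (ρ s) := by
  intro s hs
  obtain ⟨hmemρ, hfρ⟩ := hinv₂ _ (hmem s hs)
  rw [← hρ s] at hmemρ hfρ
  have hpos := hf' _ hmemρ
  have hρ0 : ρ s ≠ 0 := (hJ hmemρ).ne'
  have hstrict : HasStrictDerivAt f (deriv f (ρ s)) (ρ s) :=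
    (hf.contDiffAt (isOpen_Ioo.mem_nhds hmemρ)).hasStrictDerivAt one_ne_zero
  -- Inverse function theorem: `finv` agrees with the local inverse of `f` near `u s * v s`.
  have hinv : HasStrictDerivAt finv (deriv f (ρ s))⁻¹ (f (ρ s)) :=
    hstrict.to_local_left_inverse hpos.ne'
      (Filter.eventually_of_mem (isOpen_Ioo.mem_nhds hmemρ) hinv₁)
  have hprod : HasDerivAt (fun t => u t * v t) (deriv u s * v s + u s * deriv v s) s :=
    (hu s hs).hasDerivAt.mul (hv s hs).hasDerivAt
  have hderiv : HasDerivAt ρ ((deriv u s * v s + u s * deriv v s) / deriv f (ρ s)) s := by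
    have hcomp := (hfρ ▸ hinv.hasDerivAt).comp s hprod
    rw [show ρ = finv ∘ fun t => u t * v t from funext hρ] at *
    rw [div_eq_inv_mul]
    exact hcomp
  refine ⟨hderiv, ?_⟩
  have hn := hnorm s hs
  have ho := hode _ hmemρ
  rw [hfρ] at ho
  rw [hderiv.deriv, hlam s]
  field_simp at hn ⊢
  -- Polarization: `(u'v + uv')² - (uv' - u'v)² = 4 (uv)(u'v')`, where `uv = K h f'` by `ho`
  -- and `4 K u'v' = -f'` by `hn`.
  linear_combination 4 * deriv u s * deriv v s * ho + h (ρ s) * deriv f (ρ s) * hn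
end

section
/- Let K ∈ ℝ \ {0} and let f : ℝ → ℝ be twice continuously differentiable on J with f'(r) > 0 for all r ∈ J and f(r) = K·h(r)·f'(r) for all r ∈ J. Let λ ∈ ℝ be a constant, I ⊆ ℝ an open interval, and u, v : I → ℝ twice continuously differentiable with u(s)·v(s) ∈ f(J) for all s ∈ I. Define ρ(s) := f⁻¹(u(s)·v(s)) and assume that ρ'(s) ≠ 0 for all s ∈ I and that the first-order system holds on I: u(s)·v'(s) − u'(s)·v(s) = λ·ρ(s)·f'(ρ(s)) and ρ'(s)² = ρ(s)²·λ² − h(ρ(s)). Then the proper-time normalization (4K/f'(ρ(s)))·u'(s)·v'(s) = −1 holds for all s ∈ I, and the second-order system holds on I: u''(s) = u'(s)²·v(s)·f''(ρ(s))/f'(ρ(s))² − λ·u'(s) and v''(s) = v'(s)²·u(s)·f''(ρ(s))/f'(ρ(s))² + λ·v'(s). -/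
/-!
Differentiating `f ∘ ρ = u v` gives `u v' + u' v = f'(ρ) ρ'`. Together with the first-order system
this gives `4 (u v') (u' v) = f'(ρ)² (ρ'² - λ² ρ²) = -f'(ρ)² h(ρ)`, and since
`u v = K h(ρ) f'(ρ)`, the factor `h(ρ)` cancels wherever `ρ ≠ r*`, leaving
`4 K u' v' = -f'(ρ)`. Because `ρ' ≠ 0`, the level set `ρ = r*` consists of isolated points, so
continuity extends this normalization to the whole interval.

The derivatives of the normalization and of `u v' - u' v = λ ρ f'(ρ)` form a linear system for
`(u'', v'')` with determinant `u v' + u' v = f'(ρ) ρ' ≠ 0`; solving it (`second_order_algebra`)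
gives the second-order system.
-/

open Set

/-- On an open interval a `C²` function and its derivative both have derivatives. -/
lemma hasDerivAt_of_contDiffOn_two {g : ℝ → ℝ} {a b x : ℝ} (hg : ContDiffOn ℝ 2 g (Ioo a b))
    (hx : x ∈ Ioo a b) :
    HasDerivAt g (deriv g x) x ∧ HasDerivAt (deriv g) (deriv (deriv g) x) x := by
  have h1 : ContDiffOn ℝ 1 (deriv g) (Ioo a b) :=
    hg.deriv_of_isOpen isOpen_Ioo (by norm_num)
  exact ⟨((hg.differentiableOn (by norm_num)).differentiableAt
      (isOpen_Ioo.mem_nhds hx)).hasDerivAt,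
    ((h1.differentiableOn (by norm_num)).differentiableAt (isOpen_Ioo.mem_nhds hx)).hasDerivAt⟩

/-- The linear system for the second derivatives, solved by Cramer's rule. Here `u₁, u₂` are the
first and second derivatives of `u` (likewise for `v`), `r₁ = ρ'`, `F = f'(ρ)`, `G = f''(ρ)`. -/
lemma second_order_algebra {K F G r r₁ lam u u₁ u₂ v v₁ v₂ : ℝ} (hK : K ≠ 0) (hF : F ≠ 0)
    (hr₁ : r₁ ≠ 0) (hsum : u₁ * v + u * v₁ = F * r₁) (hdiff : u * v₁ - u₁ * v = lam * (r * F))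
    (hnorm : 4 * K * (u₁ * v₁) = -F) (e1 : 4 * K * (u₂ * v₁ + u₁ * v₂) = -(G * r₁))
    (e2 : u * v₂ - u₂ * v = lam * (r₁ * F + r * (G * r₁))) :
    u₂ = u₁ ^ 2 * v * G / F ^ 2 - lam * u₁ ∧ v₂ = v₁ ^ 2 * u * G / F ^ 2 + lam * v₁ := by
  have hu : 4 * K * F * u₂ = -(u * G) - 4 * K * u₁ * lam * (F + r * G) := by
    apply mul_left_cancel₀ hr₁
    linear_combination u * e1 - 4 * K * u₁ * e2 - 4 * K * u₂ * hsum
  have hv : 4 * K * F * v₂ = -(v * G) + 4 * K * v₁ * lam * (F + r * G) := by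
    apply mul_left_cancel₀ hr₁
    linear_combination v * e1 + 4 * K * v₁ * e2 - 4 * K * v₂ * hsum
  have h4K : 4 * K ≠ 0 := mul_ne_zero (by norm_num) hK
  have hu' : u₂ * F ^ 2 = u₁ ^ 2 * v * G - lam * u₁ * F ^ 2 := by
    apply mul_left_cancel₀ h4K
    linear_combination F * hu - u * G * hnorm + 4 * K * u₁ * G * hdiff
  have hv' : v₂ * F ^ 2 = v₁ ^ 2 * u * G + lam * v₁ * F ^ 2 := by
    apply mul_left_cancel₀ h4K
    linear_combination F * hv - v * G * hnorm - 4 * K * v₁ * G * hdiff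
  constructor
  · field_simp
    linear_combination hu'
  · field_simp
    linear_combination hv'

/-- Converse direction: if a twice continuously differentiable curve `(u,v)`
satisfies the first-order system `u·v' − u'·v = λ·ρ·f'(ρ)` and `(ρ')² = ρ²·λ² − h(ρ)` with
constant `λ` and nowhere vanishing `ρ'`, then it is parametrized by proper time
(`(4K/f'(ρ))·u'·v' = −1`) and satisfies the second-order system. -/
theorem stmt_15 (a b rstar K : ℝ) (h f finv : ℝ → ℝ)
    (hJ : Ioo a b ⊆ Ioi 0) (hr : rstar ∈ Ioo a b)
    (hcont : ContinuousOn h (Ioo a b))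
    (h0 : h rstar = 0) (hne : ∀ r ∈ Ioo a b, r ≠ rstar → h r ≠ 0)
    (hK : K ≠ 0)
    (hf : ContDiffOn ℝ 2 f (Ioo a b))
    (hf' : ∀ r ∈ Ioo a b, 0 < deriv f r)
    (hode : ∀ r ∈ Ioo a b, f r = K * h r * deriv f r)
    (hinv₁ : ∀ r ∈ Ioo a b, finv (f r) = r)
    (hinv₂ : ∀ y ∈ f '' Ioo a b, finv y ∈ Ioo a b ∧ f (finv y) = y)
    (lam c d : ℝ) (u v : ℝ → ℝ)
    (hu : ContDiffOn ℝ 2 u (Ioo c d))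
    (hv : ContDiffOn ℝ 2 v (Ioo c d))
    (hmem : ∀ s ∈ Ioo c d, u s * v s ∈ f '' Ioo a b)
    (ρ : ℝ → ℝ)
    (hρ : ∀ s, ρ s = finv (u s * v s))
    (hρ' : ∀ s ∈ Ioo c d, deriv ρ s ≠ 0)
    (hsys1 : ∀ s ∈ Ioo c d,
      u s * deriv v s - deriv u s * v s = lam * (ρ s * deriv f (ρ s)))
    (hsys2 : ∀ s ∈ Ioo c d, (deriv ρ s) ^ 2 = (ρ s) ^ 2 * lam ^ 2 - h (ρ s)) :
    (∀ s ∈ Ioo c d, (4 * K / deriv f (ρ s)) * deriv u s * deriv v s = -1) ∧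
      (∀ s ∈ Ioo c d,
        deriv (deriv u) s =
            (deriv u s) ^ 2 * v s * deriv (deriv f) (ρ s) / (deriv f (ρ s)) ^ 2 -
              lam * deriv u s ∧
          deriv (deriv v) s =
            (deriv v s) ^ 2 * u s * deriv (deriv f) (ρ s) / (deriv f (ρ s)) ^ 2 +
              lam * deriv v s) := by
  have hρJ : ∀ s ∈ Ioo c d, ρ s ∈ Ioo a b := fun s hs => by
    rw [hρ]; exact (hinv₂ _ (hmem s hs)).1
  have hfρ : ∀ s ∈ Ioo c d, f (ρ s) = u s * v s := fun s hs => by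
    rw [hρ]; exact (hinv₂ _ (hmem s hs)).2
  have hnhds : ∀ s ∈ Ioo c d, Ioo c d ∈ nhds s := fun s hs => isOpen_Ioo.mem_nhds hs
  have dρ : ∀ s ∈ Ioo c d, HasDerivAt ρ (deriv ρ s) s := fun s hs =>
    (differentiableAt_of_deriv_ne_zero (hρ' s hs)).hasDerivAt
  have du := fun s (hs : s ∈ Ioo c d) => hasDerivAt_of_contDiffOn_two hu hs
  have dv := fun s (hs : s ∈ Ioo c d) => hasDerivAt_of_contDiffOn_two hv hs
  have df := fun s (hs : s ∈ Ioo c d) => hasDerivAt_of_contDiffOn_two hf (hρJ s hs)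
  have dF : ∀ s ∈ Ioo c d, HasDerivAt (fun t => deriv f (ρ t))
      (deriv (deriv f) (ρ s) * deriv ρ s) s := fun s hs => (df s hs).2.comp s (dρ s hs)
  have duv : ∀ s ∈ Ioo c d, HasDerivAt (fun t => 4 * K * (deriv u t * deriv v t))
      (4 * K * (deriv (deriv u) s * deriv v s + deriv u s * deriv (deriv v) s)) s :=
    fun s hs => ((du s hs).2.mul (dv s hs).2).const_mul (4 * K)
  have hsum : ∀ s ∈ Ioo c d,
      deriv u s * v s + u s * deriv v s = deriv f (ρ s) * deriv ρ s := fun s hs => by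
    have h1 : HasDerivAt (fun t => u t * v t) _ s := (du s hs).1.mul (dv s hs).1
    have h2 : HasDerivAt (fun t => f (ρ t)) _ s := (df s hs).1.comp s (dρ s hs)
    exact h1.unique (h2.congr_of_eventuallyEq
      (Filter.eventually_of_mem (hnhds s hs) fun t ht => (hfρ t ht).symm))
  have hgen : ∀ s ∈ Ioo c d, ρ s ≠ rstar →
      4 * K * (deriv u s * deriv v s) = -deriv f (ρ s) := fun s hs hne' => by
    have hh := hne _ (hρJ s hs) hne'
    have hF := (hf' _ (hρJ s hs)).ne'
    have e : u s * v s = K * h (ρ s) * deriv f (ρ s) := by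
      rw [← hfρ s hs, hode _ (hρJ s hs)]
    have es := hsum s hs
    have ed := hsys1 s hs
    have ea : 2 * (u s * deriv v s) =
        deriv f (ρ s) * (deriv ρ s + lam * ρ s) := by linear_combination es + ed
    have eb : 2 * (deriv u s * v s) =
        deriv f (ρ s) * (deriv ρ s - lam * ρ s) := by linear_combination es - ed
    apply mul_left_cancel₀ (mul_ne_zero hh hF)
    linear_combination (-4) * (deriv u s * deriv v s) * e + 2 * (deriv u s * v s) * ea
      + deriv f (ρ s) * (deriv ρ s + lam * ρ s) * eb + deriv f (ρ s) ^ 2 * hsys2 s hs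
  have hnorm : ∀ s ∈ Ioo c d,
      4 * K * (deriv u s * deriv v s) = -deriv f (ρ s) := fun s hs => by
    have hev : ∀ᶠ t in nhdsWithin s {s}ᶜ,
        4 * K * (deriv u t * deriv v t) = -deriv f (ρ t) := by
      filter_upwards [(dρ s hs).eventually_ne (c := rstar) (hρ' s hs),
        nhdsWithin_le_nhds (hnhds s hs)] with t h1 h2
      exact hgen t h2 h1
    have t1 := (duv s hs).continuousAt.tendsto.mono_left (nhdsWithin_le_nhds (s := {s}ᶜ))
    have t2 := (dF s hs).neg.continuousAt.tendsto.mono_left (nhdsWithin_le_nhds (s := {s}ᶜ))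
    exact tendsto_nhds_unique (t1.congr' hev) t2
  refine ⟨fun s hs => ?_, fun s hs => ?_⟩
  · have hF := (hf' _ (hρJ s hs)).ne'
    field_simp
    linear_combination hnorm s hs
  · have e1 := (duv s hs).unique ((dF s hs).neg.congr_of_eventuallyEq
      (Filter.eventually_of_mem (hnhds s hs) hnorm))
    have d1 : HasDerivAt (fun t => u t * deriv v t - deriv u t * v t) _ s :=
      ((du s hs).1.mul (dv s hs).2).sub ((du s hs).2.mul (dv s hs).1)
    have d2 : HasDerivAt (fun t => lam * (ρ t * deriv f (ρ t))) _ s :=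
      ((dρ s hs).mul (dF s hs)).const_mul lam
    have e2 := d1.unique (d2.congr_of_eventuallyEq
      (Filter.eventually_of_mem (hnhds s hs) hsys1))
    exact second_order_algebra hK (hf' _ (hρJ s hs)).ne' (hρ' s hs) (hsum s hs) (hsys1 s hs)
      (hnorm s hs) e1 (by linear_combination e2)
end

section
/- Assume h'(r*) ≠ 0 and let λ ∈ ℝ \ {0}; set K := 1/h'(r*). Then there exists δ > 0 with (r* − δ, r* + δ) ⊆ J such that λ²·r² > h(r) for all r ∈ (r* − δ, r* + δ), and there exists a function f_λ that is smooth on (r* − δ, r* + δ) with f_λ'(r) > 0 for all r ∈ (r* − δ, r* + δ) and f_λ(r) = K·h_λ(r)·f_λ'(r) for all r ∈ (r* − δ, r* + δ), where h_λ(r) := h(r)·√(1 − h(r)/(λ²r²)). That is, the horizon ODE for the effective coefficient h_λ admits an increasing solution near r* with the same constant K = 1/h'(r*) as for h. -/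
/-!
Write `H = h_λ` for the effective coefficient. It is smooth near `r*`, and since the square root
equals `1` at the zero `r*` of `h`, `H(r*) = 0` and `H'(r*) = h'(r*) = 1/K`. By Hadamard's lemma
(`exists_smooth_factor`), `H(r) = (r - r*) q(r)` with `q` smooth and `q(r*) = 1/K`. For the ansatz
`f(r) = (r - r*) exp φ(r)`, the equation `f = K H f'` reduces to
`1 + (r - r*) φ'(r) = 1 / (K q(r))`. The function `1 / (K q) - 1` is smooth near `r*` and vanishes
there, so Hadamard's lemma applies again and `φ` is a primitive of the resulting quotient. Finally
`f' = exp φ / (K q)`, which is positive near `r*` because `K q(r*) = 1`.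

Hadamard's lemma is proved for functions smooth on all of `ℝ`, through the representation
`q(x) = ∫₀¹ F'(c + t (x - c)) dt`; functions that are only smooth near `r*` are first replaced by
global ones with a bump function (`exists_smooth_extension`).
-/

open Set

/-- A function smooth on an open set agrees near each point of it with a globally smooth function:
multiply by a bump function. -/
lemma exists_smooth_extension {F : ℝ → ℝ} {U : Set ℝ} {c : ℝ} (hU : IsOpen U) (hc : c ∈ U)
    (hF : ContDiffOn ℝ (⊤ : ℕ∞) F U) :
    ∃ G : ℝ → ℝ, ContDiff ℝ (⊤ : ℕ∞) G ∧ F =ᶠ[nhds c] G := by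
  obtain ⟨ε, hε, hball⟩ := Metric.nhds_basis_closedBall.mem_iff.1 (hU.mem_nhds hc)
  let χ : ContDiffBump c := ⟨ε / 2, ε, by positivity, by linarith⟩
  refine ⟨fun x => χ x * F x, ?_, ?_⟩
  · refine contDiff_iff_contDiffAt.2 fun x => ?_
    by_cases hx : x ∈ tsupport χ
    · rw [χ.tsupport_eq] at hx
      exact χ.contDiffAt.mul (hF.contDiffAt (hU.mem_nhds (hball hx)))
    · refine (contDiffAt_const (c := (0 : ℝ))).congr_of_eventuallyEq ?_
      filter_upwards [notMem_tsupport_iff_eventuallyEq.1 hx] with y hy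
      simp [hy]
  · filter_upwards [χ.eventuallyEq_one] with x hx
    simp [hx]

/-- Differentiation under the integral sign; the exponent `n` rises by one, which is why it is kept
general. -/
lemma hasDerivAt_averaged {G : ℝ → ℝ} (hG : ContDiff ℝ (⊤ : ℕ∞) G) (c : ℝ) (n : ℕ) (x₀ : ℝ) :
    HasDerivAt (fun x => ∫ t in (0 : ℝ)..1, t ^ n * G (c + t * (x - c)))
      (∫ t in (0 : ℝ)..1, t ^ (n + 1) * deriv G (c + t * (x₀ - c))) x₀ := by
  have hGc : Continuous G := hG.continuous
  have hG'c : Continuous (deriv G) := (contDiff_infty_iff_deriv.1 hG).2.continuous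
  have hcont : Continuous
      (fun p : ℝ × ℝ => p.2 ^ (n + 1) * deriv G (c + p.2 * (p.1 - c))) := by fun_prop
  obtain ⟨C, hC⟩ := ((isCompact_closedBall x₀ 1).prod
    (isCompact_Icc (a := (0 : ℝ)) (b := 1))).exists_bound_of_continuousOn hcont.continuousOn
  refine (intervalIntegral.hasDerivAt_integral_of_dominated_loc_of_deriv_le
    (F := fun x t => t ^ n * G (c + t * (x - c)))
    (F' := fun x t => t ^ (n + 1) * deriv G (c + t * (x - c))) (bound := fun _ => C)
    (Metric.closedBall_mem_nhds x₀ one_pos) ?_ ?_ ?_ ?_ ?_ ?_).2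
  · refine Filter.Eventually.of_forall fun x => Continuous.aestronglyMeasurable ?_
    fun_prop
  · refine Continuous.intervalIntegrable ?_ _ _
    fun_prop
  · refine Continuous.aestronglyMeasurable ?_
    fun_prop
  · refine Filter.Eventually.of_forall fun t ht x hx => hC (x, t) ⟨hx, ?_⟩
    rw [uIoc_of_le zero_le_one] at ht
    exact ⟨ht.1.le, ht.2⟩
  · exact intervalIntegrable_const
  · refine Filter.Eventually.of_forall fun t _ x _ => ?_
    have h1 : HasDerivAt (fun y : ℝ => c + t * (y - c)) t x := by
      simpa using (((hasDerivAt_id x).sub_const c).const_mul t).const_add c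
    have h2 : HasDerivAt G (deriv G (c + t * (x - c))) (c + t * (x - c)) :=
      ((contDiff_infty_iff_deriv.1 hG).1 _).hasDerivAt
    exact ((h2.comp x h1).const_mul (t ^ n)).congr_deriv (by ring)

lemma contDiff_averaged (c : ℝ) (k : ℕ) : ∀ (n : ℕ) {G : ℝ → ℝ}, ContDiff ℝ (⊤ : ℕ∞) G →
    ContDiff ℝ k (fun x => ∫ t in (0 : ℝ)..1, t ^ n * G (c + t * (x - c))) := by
  induction k with
  | zero =>
    intro n G hG
    exact contDiff_zero.2 (continuous_iff_continuousAt.2 fun x =>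
      (hasDerivAt_averaged hG c n x).continuousAt)
  | succ k ih =>
    intro n G hG
    rw [Nat.cast_add, Nat.cast_one, contDiff_succ_iff_deriv]
    refine ⟨fun x => (hasDerivAt_averaged hG c n x).differentiableAt, by simp, ?_⟩
    rw [funext fun x => (hasDerivAt_averaged hG c n x).deriv]
    exact ih (n + 1) (contDiff_infty_iff_deriv.1 hG).2

/-- Hadamard's lemma in one variable. -/
lemma exists_smooth_factor {F : ℝ → ℝ} (hF : ContDiff ℝ (⊤ : ℕ∞) F) {c : ℝ} (hc : F c = 0) :
    ∃ q : ℝ → ℝ, ContDiff ℝ (⊤ : ℕ∞) q ∧ (∀ x, F x = (x - c) * q x) ∧ q c = deriv F c := by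
  obtain ⟨hFd, hF'⟩ := contDiff_infty_iff_deriv.1 hF
  have hF'c : Continuous (deriv F) := hF'.continuous
  refine ⟨fun x => ∫ t in (0 : ℝ)..1, t ^ 0 * deriv F (c + t * (x - c)),
    contDiff_infty.2 fun k => contDiff_averaged c k 0 hF', fun x => ?_, by simp⟩
  have hder : ∀ t ∈ uIcc (0 : ℝ) 1, HasDerivAt (fun t => F (c + t * (x - c)))
      ((x - c) * deriv F (c + t * (x - c))) t := by
    intro t _
    have h1 : HasDerivAt (fun t : ℝ => c + t * (x - c)) (x - c) t := by
      simpa using ((hasDerivAt_id t).mul_const (x - c)).const_add c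
    rw [mul_comm]
    exact (hFd _).hasDerivAt.comp t h1
  have hint := intervalIntegral.integral_eq_sub_of_hasDerivAt hder
    (Continuous.intervalIntegrable (by fun_prop) _ _)
  rw [intervalIntegral.integral_const_mul] at hint
  simpa [hc] using hint.symm

/-- If `h` is smooth on `J = Ioo a b ⊆ (0,∞)` with simple zero at `r*`
(`h'(r*) ≠ 0`, `K := 1/h'(r*)`) and `λ ≠ 0`, then on some interval `(r*−δ, r*+δ) ⊆ J` one
has `λ²·r² > h(r)`, and the horizon ODE for the effective coefficient
`h_λ(r) := h(r)·√(1 − h(r)/(λ²r²))` admits a smooth increasing solution `f_λ` with the same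
constant `K`. -/
theorem stmt_18 (a b rstar lam : ℝ) (h : ℝ → ℝ)
    (hJ : Ioo a b ⊆ Ioi 0) (hr : rstar ∈ Ioo a b)
    (hsm : ContDiffOn ℝ (⊤ : ℕ∞) h (Ioo a b))
    (h0 : h rstar = 0) (hne : ∀ r ∈ Ioo a b, r ≠ rstar → h r ≠ 0)
    (hd : deriv h rstar ≠ 0) (hlam : lam ≠ 0)
    (K : ℝ) (hKdef : K = 1 / deriv h rstar) :
    ∃ δ > 0, Ioo (rstar - δ) (rstar + δ) ⊆ Ioo a b ∧
      (∀ r ∈ Ioo (rstar - δ) (rstar + δ), h r < lam ^ 2 * r ^ 2) ∧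
      ∃ flam : ℝ → ℝ,
        ContDiffOn ℝ (⊤ : ℕ∞) flam (Ioo (rstar - δ) (rstar + δ)) ∧
        (∀ r ∈ Ioo (rstar - δ) (rstar + δ), 0 < deriv flam r) ∧
        (∀ r ∈ Ioo (rstar - δ) (rstar + δ),
          flam r =
            K * (h r * Real.sqrt (1 - h r / (lam ^ 2 * r ^ 2))) * deriv flam r) := by
  set s : ℝ → ℝ := fun r => Real.sqrt (1 - h r / (lam ^ 2 * r ^ 2)) with hs
  set U : Set ℝ := {r ∈ Ioo a b | h r - lam ^ 2 * r ^ 2 < 0} with hUdef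
  have hUo : IsOpen U :=
    (hsm.continuousOn.sub (by fun_prop)).isOpen_inter_preimage isOpen_Ioo isOpen_Iio
  have hpos : ∀ r ∈ Ioo a b, 0 < lam ^ 2 * r ^ 2 := fun r hr' => by
    have : 0 < r := hJ hr'
    positivity
  have hrU : rstar ∈ U := ⟨hr, by rw [h0]; linarith [hpos rstar hr]⟩
  have hhU : ContDiffOn ℝ (⊤ : ℕ∞) h U := hsm.mono fun r hr' => hr'.1
  have hsU : ContDiffOn ℝ (⊤ : ℕ∞) s U := by
    refine ContDiffOn.sqrt (contDiffOn_const.sub (hhU.div (by fun_prop)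
      fun r hr' => (hpos r hr'.1).ne')) fun r hr' => ?_
    have := (div_lt_one (hpos r hr'.1)).2 (sub_neg.1 hr'.2)
    linarith
  have hUn : U ∈ nhds rstar := hUo.mem_nhds hrU
  have hs1 : s rstar = 1 := by simp [hs, h0]
  obtain ⟨H, hH, hHeq⟩ := exists_smooth_extension hUo hrU (hhU.mul hsU)
  have hH0 : H rstar = 0 := by simp [← hHeq.eq_of_nhds, h0]
  have hH' : deriv H rstar = deriv h rstar := by
    have h1 : DifferentiableAt ℝ h rstar := (hhU.contDiffAt hUn).differentiableAt (by simp)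
    have h2 : DifferentiableAt ℝ s rstar := (hsU.contDiffAt hUn).differentiableAt (by simp)
    rw [← hHeq.deriv_eq, deriv_fun_mul h1 h2, h0, hs1]
    ring
  obtain ⟨q, hq, hHq, hqr⟩ := exists_smooth_factor hH hH0
  have hKq : K * q rstar = 1 := by
    rw [hqr, hH', hKdef]
    field_simp
  set V : Set ℝ := {r | 0 < K * q r}
  have hKqs : ContDiff ℝ (⊤ : ℕ∞) fun r => K * q r := contDiff_const.mul hq
  have hVo : IsOpen V := isOpen_lt continuous_const hKqs.continuous
  have hrV : rstar ∈ V := by simp [V, hKq]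
  have hw : ContDiffOn ℝ (⊤ : ℕ∞) (fun r => (K * q r)⁻¹ - 1) V :=
    (hKqs.contDiffOn.inv fun r hr' => (ne_of_gt hr')).sub contDiffOn_const
  obtain ⟨W, hW, hWeq⟩ := exists_smooth_extension hVo hrV hw
  have hW0 : W rstar = 0 := by simp [← hWeq.eq_of_nhds, hKq]
  obtain ⟨p, hp, hWp, -⟩ := exists_smooth_factor hW hW0
  set φ : ℝ → ℝ := fun r => ∫ t in rstar..r, p t
  have hφd : ∀ r, HasDerivAt φ (p r) r := fun r =>
    (hp.continuous.integral_hasStrictDerivAt rstar r).hasDerivAt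
  have hφ : ContDiff ℝ (⊤ : ℕ∞) φ := by
    rw [contDiff_infty_iff_deriv, funext fun r => (hφd r).deriv]
    exact ⟨fun r => (hφd r).differentiableAt, hp⟩
  have hfd : ∀ r, HasDerivAt (fun r => (r - rstar) * Real.exp (φ r))
      (Real.exp (φ r) * (1 + W r)) r := fun r => by
    refine (((hasDerivAt_id r).sub_const rstar).mul (hφd r).exp).congr_deriv ?_
    rw [hWp, id]
    ring
  have hev : ∀ᶠ r in nhds rstar, r ∈ U ∧ r ∈ V ∧ h r * s r = H r ∧ (K * q r)⁻¹ - 1 = W r := by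
    filter_upwards [hUn, hVo.mem_nhds hrV, hHeq, hWeq] with r h1 h2 h3 h4
    exact ⟨h1, h2, h3, h4⟩
  obtain ⟨δ, hδ, hball⟩ := Metric.eventually_nhds_iff_ball.1 hev
  rw [Real.ball_eq_Ioo] at hball
  refine ⟨δ, hδ, fun r hr' => (hball r hr').1.1, fun r hr' => sub_neg.1 (hball r hr').1.2,
    fun r => (r - rstar) * Real.exp (φ r),
    ((contDiff_id.sub contDiff_const).mul hφ.exp).contDiffOn, fun r hr' => ?_, fun r hr' => ?_⟩
  · obtain ⟨-, hV, -, hWr⟩ := hball r hr'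
    have : 0 < (K * q r)⁻¹ := inv_pos.2 hV
    rw [(hfd r).deriv, ← hWr, add_sub_cancel]
    positivity
  · obtain ⟨-, hV, hHr, hWr⟩ := hball r hr'
    have hV' : K * q r ≠ 0 := ne_of_gt hV
    change _ = K * (h r * s r) * _
    rw [(hfd r).deriv, ← hWr, add_sub_cancel, hHr, hHq]
    calc (r - rstar) * Real.exp (φ r)
        = (r - rstar) * Real.exp (φ r) * ((K * q r) * (K * q r)⁻¹) := by
          rw [mul_inv_cancel₀ hV', mul_one]
      _ = _ := by ring
end
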